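/- If P̃^l_{ijk}α_l = P^l_{ijk}α_l holds at every (x,y) ∈ U × (ℝ^n \ {0}), then at every (x,y) with y ≠ 0: 0 = (1/(2E)) · ( X^i_m X^m X^s_i α_s · ( X^lα_l − (y^mα_m)²/(2E) ) − ( X^k X^j_k α_j )² ) + X^j X^s_j X^a X^c X^i_m X^m Q_{aisc}. -/

import Mathlib

/-!
The hypothesis turns out to be very rigid: it forces `X^l` to be independent of the direction `y`.
Every term of the claimed identity contains a factor `X^l_i`, so both summands vanish.

Fix `x ∈ U` and write `a = dα(x)`, `e = E(x, ·)`, `p = ∂e/∂y`, `g` for the Hessian of `e`.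

**A quadratic form.** The conformal change alters the spray by
`G̃^l - G^l = (a y) y^l - e X^l` (`spray_confE`). Contracting with `a_l` and differentiating three
times, the hypothesis says that the third derivatives of the `2`-homogeneous function
`(a y)² - e · a g⁻¹ a` vanish on `y ≠ 0`. This set is connected since `n ≥ 2`, so the second
derivatives are constant and the function is a quadratic form (`quadratic_of_third`). Hence
`e · a g⁻¹ a = ½ y M y` for a symmetric matrix `M` (`exists_quad`).

**Rigidity.** If `a = 0` then `X^l = 0`. If `a ≠ 0`, then `e` is a multiple of `y M y`
(`Mink.QuadNorm.hessian_const`). Let `Ψ` be the inverse of the Legendre map `y ↦ p(y)`.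
* At `Ψ a` the function `a g⁻¹ a` has a critical point with vanishing second derivatives, which
  gives `M = 2 e g` at `Ψ a` (`hess_at`). In particular `M` is positive definite.
* The cubic function `F(c) = ½ (c M⁻¹ c)(a Ψ(c)) - e(Ψ(c)) (a M⁻¹ c)` of a covector `c` has
  derivative `½ (c M⁻¹ c)(a g⁻¹ a) - e` in the direction `a`. Multiplied by `e(y)`, where
  `y = Ψ(c)`, this is a quarter of `(y M y)(p M⁻¹ p) - (p y)²`, so it is nonnegative by
  Cauchy–Schwarz, and it vanishes only where `p` is proportional to `M y` (`deriv_nonneg`).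
* Since `M = 2 e g` at `Ψ a`, the quotient `F(a + s b) / s³` has a two-sided limit at `s = 0`
  (`cubic_limit`). By homogeneity, `F(b + t a) + F(-b + t a)` tends to `0` as `t → ∞`, and,
  replacing `a` by `-a`, also as `t → -∞`. Being monotone, it vanishes identically, so equality
  holds in Cauchy–Schwarz at every `b` outside the line of `a` (`grad_prop`). On that line `hess_at`
  applies directly.
* So `p` is everywhere proportional to `M y`, whence `e / (y M y)` has zero derivative and is
  constant.

Thus `g` does not depend on `y`, and neither does `X^l = g^{lm} a_m` (`XupD_eq_zero`).
-/

/- Common framework: Finsler energies in local coordinates, following the paper's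
   notation.  `x` is the base point, `y` the fiber (direction) variable. -/

noncomputable section
open scoped BigOperators

namespace FinslerConformal

/-- Vectors in local coordinates. -/
abbrev Vec (n : ℕ) := Fin n → ℝ

/-- Functions on `U × ℝⁿ`, written with separate base and fiber variables. -/
abbrev Fn (n : ℕ) := Vec n → Vec n → ℝ

variable {n : ℕ}

/-- Partial derivative in the fiber variable `y`, in direction `i`. -/
def pdy (i : Fin n) (f : Fn n) : Fn n :=
  fun x y => fderiv ℝ (f x) y (Pi.single i 1)

/-- Partial derivative in the base variable `x`, in direction `i`. -/
def pdx (i : Fin n) (f : Fn n) : Fn n :=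
  fun x y => fderiv ℝ (fun x' => f x' y) x (Pi.single i 1)

/-- Partial derivative `α_i = ∂α/∂x^i` of a function of the position only. -/
def pda (α : Vec n → ℝ) (i : Fin n) (x : Vec n) : ℝ :=
  fderiv ℝ α x (Pi.single i 1)

/-- Riemann–Finsler metric `g_{ij} = ∂²E/∂y^i∂y^j`. -/
def gdown (E : Fn n) (i j : Fin n) : Fn n := pdy i (pdy j E)

/-- The Riemann–Finsler metric as a matrix. -/
def gmat (E : Fn n) (x y : Vec n) : Matrix (Fin n) (Fin n) ℝ :=
  Matrix.of fun i j => gdown E i j x y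

/-- Inverse metric `g^{ij}`. -/
def gup (E : Fn n) (i j : Fin n) : Fn n := fun x y => (gmat E x y)⁻¹ i j

/-- First Cartan tensor `C_{ijk} = ∂g_{ij}/∂y^k`. -/
def cartanDown (E : Fn n) (i j k : Fin n) : Fn n := pdy k (gdown E i j)

/-- `C^l_{ij} = g^{lk} C_{ijk}`. -/
def cartanUp (E : Fn n) (l i j : Fin n) : Fn n :=
  fun x y => ∑ k, gup E l k x y * cartanDown E i j k x y

/-- Geodesic spray coefficients
`G^l = ½ g^{lm}(y^k ∂²E/∂y^m∂x^k − ∂E/∂x^m)`. -/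
def spray (E : Fn n) (l : Fin n) : Fn n :=
  fun x y => (1/2) * ∑ m, gup E l m x y *
    ((∑ k, y k * pdy m (pdx k E) x y) - pdx m E x y)

/-- `G^l_i = ∂G^l/∂y^i`. -/
def sprayD1 (E : Fn n) (l i : Fin n) : Fn n := pdy i (spray E l)

/-- `G^l_{ij} = ∂G^l_i/∂y^j`. -/
def sprayD2 (E : Fn n) (l i j : Fin n) : Fn n := pdy j (sprayD1 E l i)

/-- `G^l_{ijk} = ∂G^l_{ij}/∂y^k`. -/
def sprayD3 (E : Fn n) (l i j k : Fin n) : Fn n := pdy k (sprayD2 E l i j)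

/-- Mixed curvature of the Berwald connection `P^l_{ijk} = −G^l_{ijk}`. -/
def mixedCurv (E : Fn n) (l i j k : Fin n) : Fn n :=
  fun x y => - sprayD3 E l i j k x y

/-- Landsberg tensor
`P^l_{ij} = ½ g^{lm}(∂g_{jm}/∂x^i − 2G^k_i C_{jkm} − G^k_{ij} g_{km} − G^k_{im} g_{jk})`. -/
def landsberg (E : Fn n) (l i j : Fin n) : Fn n :=
  fun x y => (1/2) * ∑ m, gup E l m x y *
    (pdx i (gdown E j m) x y
      - 2 * ∑ k, sprayD1 E k i x y * cartanDown E j k m x y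
      - ∑ k, sprayD2 E k i j x y * gdown E k m x y
      - ∑ k, sprayD2 E k i m x y * gdown E j k x y)

/-- A Finsler energy on an open set `U ⊆ ℝⁿ`: `C^∞` on `U × (ℝⁿ \ {0})`,
positively 2-homogeneous in `y`, with positive definite fiberwise Hessian. -/
structure IsFinslerEnergy (U : Set (Vec n)) (E : Fn n) : Prop where
  smooth : ContDiffOn ℝ (⊤ : ℕ∞) (fun p : Vec n × Vec n => E p.1 p.2) (U ×ˢ {y : Vec n | y ≠ 0})
  homog : ∀ x ∈ U, ∀ y : Vec n, y ≠ 0 → ∀ t : ℝ, 0 < t → E x (t • y) = t ^ 2 * E x y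
  posdef : ∀ x ∈ U, ∀ y : Vec n, y ≠ 0 → (gmat E x y).PosDef

/-- Conformal change of the energy: `Ẽ = e^{2α} E`. -/
def confE (E : Fn n) (α : Vec n → ℝ) : Fn n :=
  fun x y => Real.exp (2 * α x) * E x y

/-- `X^l = g^{lm} α_m`. -/
def Xup (E : Fn n) (α : Vec n → ℝ) (l : Fin n) : Fn n :=
  fun x y => ∑ m, gup E l m x y * pda α m x

/-- `X^l_i = ∂X^l/∂y^i`. -/
def XupD (E : Fn n) (α : Vec n → ℝ) (l i : Fin n) : Fn n := pdy i (Xup E α l)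

/-- `X^l_{ij} = ∂²X^l/∂y^i∂y^j`. -/
def XupD2 (E : Fn n) (α : Vec n → ℝ) (l i j : Fin n) : Fn n := pdy j (XupD E α l i)

/-- Difference tensor of the mixed Berwald curvatures `B^l_{ijk} = G̃^l_{ijk} − G^l_{ijk}`. -/
def Bdiff (E : Fn n) (α : Vec n → ℝ) (l i j k : Fin n) : Fn n :=
  fun x y => sprayD3 (confE E α) l i j k x y - sprayD3 E l i j k x y

/-- vv-curvature of the Cartan connection `Q^l_{ijk} = C^l_{jm}C^m_{ik} − C^l_{im}C^m_{jk}`. -/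
def QUp (E : Fn n) (l i j k : Fin n) : Fn n :=
  fun x y => ∑ m, (cartanUp E l j m x y * cartanUp E m i k x y
    - cartanUp E l i m x y * cartanUp E m j k x y)

/-- Lowered vv-curvature `Q_{pijk} = g_{pl} Q^l_{ijk}`. -/
def QDown (E : Fn n) (p i j k : Fin n) : Fn n :=
  fun x y => ∑ l, gdown E p l x y * QUp E l i j k x y

/-- `y^m α_m`. -/
def yalpha (α : Vec n → ℝ) : Fn n := fun x y => ∑ m, y m * pda α m x

/-- `X^l α_l`, the Riemann–Finsler norm square of the gradient `X`. -/
def Xalpha (E : Fn n) (α : Vec n → ℝ) : Fn n :=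
  fun x y => ∑ l, Xup E α l x y * pda α l x

/-- Components of the projected vector field `η^l = X^l − ((y^mα_m)/(2E)) y^l`. -/
def etaUp (E : Fn n) (α : Vec n → ℝ) (l : Fin n) : Fn n :=
  fun x y => Xup E α l x y - (yalpha α x y / (2 * E x y)) * y l

/-- `η = η^l α_l = X^lα_l − (y^mα_m)²/(2E)`. -/
def etaSc (E : Fn n) (α : Vec n → ℝ) : Fn n :=
  fun x y => ∑ l, etaUp E α l x y * pda α l x

/-- `W^l = X^s X^l_s`. -/
def Wup (E : Fn n) (α : Vec n → ℝ) (l : Fin n) : Fn n :=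
  fun x y => ∑ s, Xup E α s x y * XupD E α l s x y

/-- The associated Riemannian energy `E_* = E · X^lα_l = E · g^{lm}α_lα_m`. -/
def Estar (E : Fn n) (α : Vec n → ℝ) : Fn n :=
  fun x y => E x y * Xalpha E α x y

/-- Riemannian gradient `X_*^l = g_*^{lk} α_k`, with respect to a Hessian matrix `gs`. -/
def Xstar (α : Vec n → ℝ) (gs : Matrix (Fin n) (Fin n) ℝ) (p : Vec n) : Vec n :=
  fun l => ∑ k, gs⁻¹ l k * pda α k p

/-- `b² = g_*^{kl} α_k α_l`. -/
def bsq (α : Vec n → ℝ) (gs : Matrix (Fin n) (Fin n) ℝ) (p : Vec n) : ℝ :=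
  ∑ k, ∑ l, gs⁻¹ k l * pda α k p * pda α l p

/-- The paper's Gram expression
`X^i_m X^m X^s_i α_s · ( X^lα_l − (y^mα_m)²/(2E) ) − ( X^k X^j_k α_j )²`. -/
def gramEtaW (E : Fn n) (α : Vec n → ℝ) : Fn n :=
  fun x y =>
    (∑ i, Wup E α i x y * ∑ s, XupD E α s i x y * pda α s x) *
      (Xalpha E α x y - (yalpha α x y) ^ 2 / (2 * E x y))
    - (∑ k, ∑ j, Xup E α k x y * XupD E α j k x y * pda α j x) ^ 2

/-- The curvature contraction `X^j X^s_j X^a X^c X^i_m X^m Q_{aisc}`. -/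
def Qcon (E : Fn n) (α : Vec n → ℝ) : Fn n :=
  fun x y => ∑ j, ∑ s, ∑ a, ∑ c, ∑ i,
    Xup E α j x y * XupD E α s j x y * Xup E α a x y * Xup E α c x y *
      Wup E α i x y * QDown E a i s c x y

/-- `θ = (X^l_s X^s α_l)/η`. -/
def thetaFn (E : Fn n) (α : Vec n → ℝ) : Fn n :=
  fun x y => (∑ l, Wup E α l x y * pda α l x) / etaSc E α x y

end FinslerConformal

open Filter Topology Matrix

/-! ### Positive definite matrices and one-variable calculus -/

namespace FinslerConformal

lemma dot_symm {n : ℕ} {M : Matrix (Fin n) (Fin n) ℝ} (hM : M.IsSymm) (u v : Vec n) :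
    u ⬝ᵥ M *ᵥ v = v ⬝ᵥ M *ᵥ u := by
  rw [dotProduct_comm u, ← vecMul_transpose, hM.eq, ← dotProduct_mulVec]

lemma PosDef.symm' {n : ℕ} {M : Matrix (Fin n) (Fin n) ℝ} (hM : M.PosDef) : M.IsSymm := by
  have := hM.isHermitian
  rwa [Matrix.IsHermitian, conjTranspose_eq_transpose_of_trivial] at this

lemma PosDef.pos' {n : ℕ} {M : Matrix (Fin n) (Fin n) ℝ} (hM : M.PosDef) {v : Vec n}
    (hv : v ≠ 0) : 0 < v ⬝ᵥ M *ᵥ v := by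
  simpa using hM.dotProduct_mulVec_pos hv

lemma PosDef.mul_inv' {n : ℕ} {M : Matrix (Fin n) (Fin n) ℝ} (hM : M.PosDef) (v : Vec n) :
    M *ᵥ M⁻¹ *ᵥ v = v := by
  have := (Matrix.isUnit_iff_isUnit_det _).1 hM.isUnit
  rw [mulVec_mulVec, Matrix.mul_nonsing_inv _ this, one_mulVec]

lemma PosDef.inv_mul' {n : ℕ} {M : Matrix (Fin n) (Fin n) ℝ} (hM : M.PosDef) (v : Vec n) :
    M⁻¹ *ᵥ M *ᵥ v = v := by
  have := (Matrix.isUnit_iff_isUnit_det _).1 hM.isUnit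
  rw [mulVec_mulVec, Matrix.nonsing_inv_mul _ this, one_mulVec]

/-- Symmetric matrices with the same quadratic form are equal. -/
lemma symm_ext {n : ℕ} {M N : Matrix (Fin n) (Fin n) ℝ} (hM : M.IsSymm) (hN : N.IsSymm)
    (h : ∀ v : Vec n, v ⬝ᵥ M *ᵥ v = v ⬝ᵥ N *ᵥ v) : M = N := by
  have key : ∀ u v : Vec n, u ⬝ᵥ M *ᵥ v = u ⬝ᵥ N *ᵥ v := by
    intro u v
    have h1 := h (u + v)
    simp only [mulVec_add, dotProduct_add, add_dotProduct, h u, h v, dot_symm hM v u,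
      dot_symm hN v u] at h1
    linarith
  ext i j
  have := key (Pi.single i 1) (Pi.single j 1)
  simpa using this

lemma HasDerivAt.dot {n : ℕ} {u v : ℝ → Vec n} {u' v' : Vec n} {t : ℝ}
    (hu : HasDerivAt u u' t) (hv : HasDerivAt v v' t) :
    HasDerivAt (fun s => u s ⬝ᵥ v s) (u' ⬝ᵥ v t + u t ⬝ᵥ v') t := by
  rw [hasDerivAt_pi] at hu hv
  have := HasDerivAt.fun_sum (u := Finset.univ) (fun i _ => (hu i).mul (hv i))
  simpa [dotProduct, Finset.sum_add_distrib] using this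

lemma hasDerivAt_line {n : ℕ} (u v : Vec n) (t : ℝ) :
    HasDerivAt (fun s : ℝ => u + s • v) v t := by
  simpa using ((hasDerivAt_id t).smul_const v).const_add u

/-- Second order Taylor expansion at `0` of a function which is differentiable near `0` and whose
derivative is differentiable at `0`. -/
lemma taylor_two {f f' : ℝ → ℝ} {c : ℝ} (h1 : ∀ᶠ s in 𝓝 0, HasDerivAt f (f' s) s)
    (h2 : HasDerivAt f' c 0) :
    Tendsto (fun s => (f s - f 0 - s * f' 0) / s ^ 2) (𝓝[≠] 0) (𝓝 (c / 2)) := by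
  refine HasDerivAt.lhopital_zero_nhdsNE (f' := fun s => f' s - f' 0) (g' := fun s => 2 * s)
    ?_ ?_ ?_ ?_ ?_ ?_
  · filter_upwards [h1.filter_mono nhdsWithin_le_nhds] with s hs
    simpa using (hs.sub_const (f 0)).fun_sub ((hasDerivAt_id' s).mul_const (f' 0))
  · filter_upwards with s
    simpa using hasDerivAt_pow 2 s
  · filter_upwards [self_mem_nhdsWithin] with s hs
    simpa using hs
  · have : ContinuousAt (fun s => f s - f 0 - s * f' 0) 0 := by
      have := h1.self_of_nhds.continuousAt
      fun_prop
    simpa using this.tendsto.mono_left nhdsWithin_le_nhds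
  · have : ContinuousAt (fun s : ℝ => s ^ 2) 0 := by fun_prop
    simpa using this.tendsto.mono_left nhdsWithin_le_nhds
  · have := (hasDerivAt_iff_tendsto_slope.1 h2).div_const 2
    refine this.congr' ?_
    filter_upwards [self_mem_nhdsWithin] with s hs
    have : s ≠ 0 := hs
    simp only [slope_def_field]
    field_simp
    simp

/-! ### Minkowski energies and the Legendre map -/

/-- A Minkowski energy `e` on `ℝⁿ`, with its gradient `p` and its Hessian `g`. All
conditions are imposed away from the origin, where `e` need not be twice differentiable. -/
structure Mink {n : ℕ} (e : Vec n → ℝ) (p : Vec n → Vec n)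
    (g : Vec n → Matrix (Fin n) (Fin n) ℝ) : Prop where
  de : ∀ y, y ≠ 0 → DifferentiableAt ℝ e y
  smooth : ∀ y, y ≠ 0 → ContDiffAt ℝ 2 p y
  fe : ∀ y, y ≠ 0 → ∀ w, fderiv ℝ e y w = p y ⬝ᵥ w
  fp : ∀ y, y ≠ 0 → ∀ w, fderiv ℝ p y w = g y *ᵥ w
  pos : ∀ y, y ≠ 0 → (g y).PosDef
  euler_e : ∀ y, y ≠ 0 → p y ⬝ᵥ y = 2 * e y
  euler_p : ∀ y, y ≠ 0 → g y *ᵥ y = p y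
  hom_e : ∀ y, y ≠ 0 → ∀ t : ℝ, 0 < t → e (t • y) = t ^ 2 * e y
  hom_p : ∀ y, y ≠ 0 → ∀ t : ℝ, 0 < t → p (t • y) = t • p y

namespace Mink

variable {n : ℕ} {e : Vec n → ℝ} {p : Vec n → Vec n} {g : Vec n → Matrix (Fin n) (Fin n) ℝ}

lemma dp (h : Mink e p g) {y : Vec n} (hy : y ≠ 0) : DifferentiableAt ℝ p y :=
  (h.smooth y hy).differentiableAt (by norm_num)

lemma hasDerivAt_e (h : Mink e p g) {c : ℝ → Vec n} {c' : Vec n} {t : ℝ}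
    (hc : HasDerivAt c c' t) (h0 : c t ≠ 0) :
    HasDerivAt (fun s => e (c s)) (p (c t) ⬝ᵥ c') t := by
  have := (h.de _ h0).hasFDerivAt.comp_hasDerivAt t hc
  rwa [h.fe _ h0] at this

lemma hasDerivAt_p (h : Mink e p g) {c : ℝ → Vec n} {c' : Vec n} {t : ℝ}
    (hc : HasDerivAt c c' t) (h0 : c t ≠ 0) :
    HasDerivAt (fun s => p (c s)) (g (c t) *ᵥ c') t := by
  have := (h.dp h0).hasFDerivAt.comp_hasDerivAt t hc
  rwa [h.fp _ h0] at this

lemma e_pos (h : Mink e p g) {y : Vec n} (hy : y ≠ 0) : 0 < e y := by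
  have h1 := PosDef.pos' (h.pos y hy) hy
  rw [h.euler_p y hy, dotProduct_comm, h.euler_e y hy] at h1
  linarith

lemma p_ne (h : Mink e p g) {y : Vec n} (hy : y ≠ 0) : p y ≠ 0 := by
  intro h0
  have := h.euler_e y hy
  have := h.e_pos hy
  simp_all

/-- The Legendre map is surjective: the covector `b` is proportional to the gradient of `e` at
a maximum point of `(b y)² / e(y)` among the `y` with `b y ≥ 0`. -/
lemma surj (h : Mink e p g) {b : Vec n} (hb : b ≠ 0) : ∃ y, y ≠ 0 ∧ p y = b := by
  set S : Set (Vec n) := {y | ‖y‖ = 1 ∧ 0 ≤ b ⬝ᵥ y} with hS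
  have hbb : 0 < b ⬝ᵥ b := by
    have := dotProduct_self_star_pos_iff (v := b)
    simpa using this.2 hb
  have hScl : IsCompact S := by
    have h1 : S = Metric.sphere (0 : Vec n) 1 ∩ {y | 0 ≤ b ⬝ᵥ y} := by
      ext y; simp [hS]
    rw [h1]
    refine (isCompact_sphere _ _).inter_right (isClosed_le continuous_const ?_)
    fun_prop
  have hSne : S.Nonempty := by
    refine ⟨‖b‖⁻¹ • b, ?_, ?_⟩
    · rw [norm_smul, norm_inv, norm_norm, inv_mul_cancel₀ (norm_ne_zero_iff.2 hb)]
    · rw [dotProduct_smul, smul_eq_mul]; positivity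
  have hS0 : ∀ y ∈ S, y ≠ 0 := by
    rintro y ⟨h1, -⟩ rfl
    simp at h1
  have hcont : ContinuousOn (fun y => (b ⬝ᵥ y) ^ 2 / e y) S := by
    intro y hy
    have h1 : ContinuousAt e y := (h.de y (hS0 y hy)).continuousAt
    have h2 : ContinuousAt (fun y => b ⬝ᵥ y) y := by fun_prop
    exact ((h2.pow 2).div h1 (h.e_pos (hS0 y hy)).ne').continuousWithinAt
  obtain ⟨y, hyS, hmax⟩ := hScl.exists_isMaxOn hSne hcont
  have hy0 := hS0 y hyS
  set c := (b ⬝ᵥ y) ^ 2 / e y with hc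
  have hle : ∀ z, z ≠ 0 → 0 ≤ b ⬝ᵥ z → (b ⬝ᵥ z) ^ 2 ≤ c * e z := by
    intro z hz hbz
    have hnz : 0 < ‖z‖ := norm_pos_iff.2 hz
    have hzS : ‖z‖⁻¹ • z ∈ S := by
      refine ⟨?_, ?_⟩
      · rw [norm_smul, norm_inv, norm_norm, inv_mul_cancel₀ hnz.ne']
      · rw [dotProduct_smul, smul_eq_mul]; positivity
    have h1 : (b ⬝ᵥ (‖z‖⁻¹ • z)) ^ 2 / e (‖z‖⁻¹ • z) ≤ c := hmax hzS
    rw [h.hom_e z hz _ (inv_pos.2 hnz), dotProduct_smul, smul_eq_mul, mul_pow,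
      mul_div_mul_left _ _ (by positivity), div_le_iff₀ (h.e_pos hz)] at h1
    exact h1
  have hcpos : 0 < c := by
    have h1 := hle b hb hbb.le
    have h2 := h.e_pos hb
    by_contra hcon
    have : c * e b ≤ 0 := mul_nonpos_of_nonpos_of_nonneg (not_lt.1 hcon) h2.le
    nlinarith [pow_pos hbb 2]
  have hby : 0 < b ⬝ᵥ y := by
    refine lt_of_le_of_ne hyS.2 fun h0 => ?_
    rw [hc, ← h0] at hcpos
    simp at hcpos
  have hcy : c * e y = (b ⬝ᵥ y) ^ 2 := by
    rw [hc, div_mul_cancel₀ _ (h.e_pos hy0).ne']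
  -- criticality in each direction `w`
  have hcrit : ∀ w, c * (p y ⬝ᵥ w) = 2 * (b ⬝ᵥ y) * (b ⬝ᵥ w) := by
    intro w
    have hl := hasDerivAt_line y w 0
    have h1 := (h.hasDerivAt_e hl (by simpa using hy0)).const_mul c
    have h2 : HasDerivAt (fun s : ℝ => b ⬝ᵥ (y + s • w)) (b ⬝ᵥ w) 0 := by
      simpa using HasDerivAt.dot (hasDerivAt_const (0 : ℝ) b) hl
    have h3 := h1.sub (h2.pow 2)
    have hev : ∀ᶠ s : ℝ in 𝓝 0, 0 < b ⬝ᵥ (y + s • w) := by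
      refine h2.continuousAt.eventually_const_lt ?_
      simpa using hby
    have hmin : IsLocalMin ((fun s : ℝ => c * e (y + s • w)) - (fun s : ℝ => b ⬝ᵥ (y + s • w)) ^ 2)
        0 := by
      filter_upwards [hev] with s hs
      have hne : y + s • w ≠ 0 := by
        intro h0; rw [h0] at hs; simp at hs
      have := hle _ hne hs.le
      simp only [Pi.sub_apply, Pi.pow_apply, zero_smul, add_zero, hcy]
      linarith
    have := hmin.hasDerivAt_eq_zero h3
    simp at this
    linarith
  have hp : (c / (2 * (b ⬝ᵥ y))) • p y = b := by
    refine dotProduct_eq _ _ fun w => ?_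
    rw [smul_dotProduct, smul_eq_mul, div_mul_eq_mul_div, hcrit w]
    field_simp
  have hpos : 0 < c / (2 * (b ⬝ᵥ y)) := by positivity
  exact ⟨_, smul_ne_zero hpos.ne' hy0, by rw [h.hom_p y hy0 _ hpos, hp]⟩

/-- The Legendre map is injective, by strict monotonicity of the gradient along segments avoiding
the origin. -/
lemma inj (h : Mink e p g) {y z : Vec n} (hy : y ≠ 0) (hz : z ≠ 0) (hyz : p y = p z) :
    y = z := by
  by_contra hne
  have hd : y - z ≠ 0 := sub_ne_zero.2 hne
  by_cases h0 : ∃ t ∈ Set.Icc (0 : ℝ) 1, z + t • (y - z) = 0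
  · obtain ⟨t, ⟨ht0, ht1⟩, ht⟩ := h0
    have h1 := h.euler_e y hy
    have h2 := h.euler_e z hz
    have h3 := h.e_pos hy
    have h4 := h.e_pos hz
    have h5 : p z ⬝ᵥ (z + t • (y - z)) = 0 := by rw [ht]; simp
    rw [hyz] at h1
    rw [dotProduct_add, dotProduct_smul, dotProduct_sub, h1, h2, smul_eq_mul] at h5
    nlinarith [mul_nonneg ht0 h3.le, mul_nonneg (sub_nonneg.2 ht1) h4.le]
  · push Not at h0
    have hder : ∀ t ∈ Set.Icc (0 : ℝ) 1,
        HasDerivAt (fun s : ℝ => p (z + s • (y - z)) ⬝ᵥ (y - z))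
          ((y - z) ⬝ᵥ g (z + t • (y - z)) *ᵥ (y - z)) t := by
      intro t ht
      have := HasDerivAt.dot (h.hasDerivAt_p (hasDerivAt_line z (y - z) t) (h0 t ht))
        (hasDerivAt_const t (y - z))
      simpa [dotProduct_comm] using this
    obtain ⟨t, ht, hteq⟩ := exists_hasDerivAt_eq_slope _ _ (zero_lt_one)
      (fun t ht => (hder t ht).continuousAt.continuousWithinAt)
      (fun t ht => hder t (Set.Ioo_subset_Icc_self ht))
    have := PosDef.pos' (h.pos _ (h0 t (Set.Ioo_subset_Icc_self ht))) hd
    rw [hteq] at this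
    simp [hyz] at this

end Mink
end FinslerConformal

namespace FinslerConformal
namespace Mink

variable {n : ℕ} {e : Vec n → ℝ} {p : Vec n → Vec n} {g : Vec n → Matrix (Fin n) (Fin n) ℝ}

lemma continuousAt_g (h : Mink e p g) {y : Vec n} (hy : y ≠ 0) : ContinuousAt g y := by
  have hev : ∀ᶠ z in 𝓝 y, z ≠ 0 := isOpen_ne.mem_nhds hy
  have h1 : ContinuousAt (fderiv ℝ p) y :=
    ((h.smooth y hy).fderiv_right (m := 1) (by norm_num)).continuousAt
  refine continuousAt_pi.2 fun i => continuousAt_pi.2 fun j => ?_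
  have h2 : ContinuousAt (fun z => fderiv ℝ p z (Pi.single j 1) i) y := by
    have := h1.clm_apply (continuousAt_const (y := (Pi.single j 1 : Vec n)))
    exact (continuousAt_pi.1 this) i
  refine h2.congr ?_
  filter_upwards [hev] with z hz
  simp [h.fp z hz]

lemma continuousAt_ginv (h : Mink e p g) {y : Vec n} (hy : y ≠ 0) :
    ContinuousAt (fun z => (g z)⁻¹) y := by
  have hdet : (g y).det ≠ 0 := (h.pos y hy).det_pos.ne'
  have : ContinuousAt Ring.inverse (g y).det := by
    rw [Ring.inverse_eq_inv']
    exact continuousAt_inv₀ hdet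
  exact (continuousAt_matrix_inv _ this).comp (h.continuousAt_g hy)

/-- `Ψ` is an inverse of the Legendre map `p` away from the origin. -/
def IsInv (p Ψ : Vec n → Vec n) : Prop := ∀ b, b ≠ 0 → Ψ b ≠ 0 ∧ p (Ψ b) = b

lemma exists_inv (h : Mink e p g) : ∃ Ψ, IsInv p Ψ := by
  have : ∀ b : Vec n, ∃ y, b ≠ 0 → y ≠ 0 ∧ p y = b := by
    intro b
    by_cases hb : b = 0
    · exact ⟨0, fun h => absurd hb h⟩
    · obtain ⟨y, hy⟩ := h.surj hb
      exact ⟨y, fun _ => hy⟩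
  choose Ψ hΨ using this
  exact ⟨Ψ, hΨ⟩

variable {Ψ : Vec n → Vec n}

lemma inv_eq (h : Mink e p g) (hΨ : IsInv p Ψ) {y b : Vec n} (hy : y ≠ 0) (hp : p y = b) :
    Ψ b = y := by
  have hb : b ≠ 0 := hp ▸ h.p_ne hy
  exact h.inj (hΨ b hb).1 hy ((hΨ b hb).2.trans hp.symm)

lemma inv_hom (h : Mink e p g) (hΨ : IsInv p Ψ) {b : Vec n} (hb : b ≠ 0) {t : ℝ} (ht : 0 < t) :
    Ψ (t • b) = t • Ψ b :=
  h.inv_eq hΨ (smul_ne_zero ht.ne' (hΨ b hb).1) (by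
    rw [h.hom_p _ (hΨ b hb).1 t ht, (hΨ b hb).2])

lemma contDiffAt_inv (h : Mink e p g) (hΨ : IsInv p Ψ) {b : Vec n} (hb : b ≠ 0) :
    ContDiffAt ℝ 2 Ψ b := by
  obtain ⟨hy, hpy⟩ := hΨ b hb
  set y := Ψ b with hydef
  let f' : Vec n ≃L[ℝ] Vec n := ContinuousLinearEquiv.equivOfInverse (fderiv ℝ p y)
    (LinearMap.toContinuousLinearMap (mulVecLin (g y)⁻¹))
    (fun w => by simpa [h.fp y hy] using PosDef.inv_mul' (h.pos y hy) w)
    (fun w => by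
      have := PosDef.mul_inv' (h.pos y hy) w
      simpa only [LinearMap.coe_toContinuousLinearMap', mulVecLin_apply, h.fp y hy] using this)
  have hf' : HasFDerivAt p (f' : Vec n →L[ℝ] Vec n) y := (h.dp hy).hasFDerivAt
  have h1 := (h.smooth y hy).to_localInverse hf' (by norm_num)
  have h2 : ∀ᶠ c in 𝓝 (p y), p ((h.smooth y hy).localInverse hf' (by norm_num) c) = c :=
    ((h.smooth y hy).hasStrictFDerivAt' hf' (by norm_num)).eventually_right_inverse
  have h3 : ∀ᶠ c in 𝓝 (p y), (h.smooth y hy).localInverse hf' (by norm_num) c ≠ 0 := by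
    refine h1.continuousAt.eventually_ne ?_
    rwa [ContDiffAt.localInverse_apply_image]
  rw [hpy] at h1 h2 h3
  refine h1.congr_of_eventuallyEq ?_
  filter_upwards [h2, h3] with c hc2 hc3
  exact h.inv_eq hΨ hc3 hc2

/-- Along the line `u + s v`, the inverse Legendre map has velocity `g⁻¹ v`. -/
lemma inv_line (h : Mink e p g) (hΨ : IsInv p Ψ) {u v : Vec n} {s : ℝ} (hs : u + s • v ≠ 0) :
    HasDerivAt (fun t : ℝ => Ψ (u + t • v)) ((g (Ψ (u + s • v)))⁻¹ *ᵥ v) s := by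
  have hl := hasDerivAt_line u v s
  have h1 := ((h.contDiffAt_inv hΨ hs).differentiableAt (by norm_num)).hasFDerivAt.comp_hasDerivAt
    s hl
  set w := fderiv ℝ Ψ (u + s • v) v
  have hcomp : HasDerivAt (fun t : ℝ => Ψ (u + t • v)) w s := h1
  have h2 := h.hasDerivAt_p hcomp (hΨ _ hs).1
  have h3 : ∀ᶠ t : ℝ in 𝓝 s, u + t • v ≠ 0 := hl.continuousAt.eventually_ne hs
  have h4 : HasDerivAt (fun t : ℝ => u + t • v) (g (Ψ (u + s • v)) *ᵥ w) s := by
    refine h2.congr_of_eventuallyEq ?_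
    filter_upwards [h3] with t ht
    exact (hΨ _ ht).2.symm
  have h5 := h4.unique hl
  have h6 := PosDef.inv_mul' (h.pos _ (hΨ _ hs).1) w
  rw [h5] at h6
  rw [h6]
  exact hcomp

/-! ### Second order contact at the point dual to `a` -/

/-- At the point where `p = a`, the function `y ↦ a g⁻¹ a` has vanishing first and second
derivatives, so the Hessian of the quadratic form `e · a g⁻¹ a` is `2 e g` there. The reason is
the identity `a g⁻¹ a = 2 a y - 2 e + (a - p) g⁻¹ (a - p)`. -/
lemma hess_at (h : Mink e p g) {a : Vec n} {M : Matrix (Fin n) (Fin n) ℝ} (hM : M.IsSymm)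
    (hq : ∀ y, y ≠ 0 → e y * (a ⬝ᵥ (g y)⁻¹ *ᵥ a) = 1 / 2 * (y ⬝ᵥ M *ᵥ y))
    {z : Vec n} (hz : z ≠ 0) (hpz : p z = a) : M = (2 * e z) • g z := by
  have hgs := PosDef.symm' (h.pos z hz)
  have haz : a ⬝ᵥ z = 2 * e z := hpz ▸ h.euler_e z hz
  have hgz : g z *ᵥ z = a := hpz ▸ h.euler_p z hz
  have hzM : z ⬝ᵥ M *ᵥ z = 4 * e z ^ 2 := by
    have h1 := hq z hz
    rw [← hgz, PosDef.inv_mul' (h.pos z hz), hgz, haz] at h1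
    linarith
  -- the expression below is `(½ (y M y) - 2 e(z) (a y) + 2 e(z)²) / s²` at `y = z + s v`
  have key : ∀ v : Vec n, Tendsto (fun s : ℝ =>
      (s * (z ⬝ᵥ M *ᵥ v - 2 * e z * (a ⬝ᵥ v)) + s ^ 2 * (v ⬝ᵥ M *ᵥ v) / 2) / s ^ 2)
      (𝓝[≠] 0) (𝓝 (e z * (v ⬝ᵥ g z *ᵥ v))) := by
    intro v
    have hl := hasDerivAt_line z v
    have hne : ∀ᶠ s : ℝ in 𝓝 0, z + s • v ≠ 0 :=
      (hl 0).continuousAt.eventually_ne (by simpa using hz)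
    have ht : Tendsto (fun s : ℝ => (e (z + s • v) - e z - s * (a ⬝ᵥ v)) / s ^ 2) (𝓝[≠] 0)
        (𝓝 (v ⬝ᵥ g z *ᵥ v / 2)) := by
      have h1 : ∀ᶠ s : ℝ in 𝓝 0, HasDerivAt (fun s : ℝ => e (z + s • v))
          (p (z + s • v) ⬝ᵥ v) s := hne.mono fun s hs => h.hasDerivAt_e (hl s) hs
      have h2 : HasDerivAt (fun s : ℝ => p (z + s • v) ⬝ᵥ v) (v ⬝ᵥ g z *ᵥ v) 0 := by
        have := HasDerivAt.dot (h.hasDerivAt_p (hl 0) (by simpa using hz))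
          (hasDerivAt_const (0 : ℝ) v)
        simpa [dotProduct_comm] using this
      simpa [hpz] using taylor_two h1 h2
    -- the difference quotient of `p` along the line
    have hw : Tendsto (fun s : ℝ => s⁻¹ • (a - p (z + s • v))) (𝓝[≠] 0) (𝓝 (-(g z *ᵥ v))) := by
      have h1 := h.hasDerivAt_p (hl 0) (by simpa using hz)
      have h2 := (hasDerivAt_iff_tendsto_slope.1 h1).neg
      simp only [zero_smul, add_zero] at h2
      refine h2.congr fun s => ?_
      simp [slope, hpz, ← smul_neg]
    have hgi : Tendsto (fun s : ℝ => (g (z + s • v))⁻¹) (𝓝[≠] 0) (𝓝 (g z)⁻¹) := by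
      have h1 : ContinuousAt (fun s : ℝ => (g (z + s • v))⁻¹) 0 :=
        ContinuousAt.comp (g := fun y => (g y)⁻¹)
          (by simpa using h.continuousAt_ginv hz) (hl 0).continuousAt
      simpa using h1.tendsto.mono_left nhdsWithin_le_nhds
    have hT : Tendsto (fun s : ℝ => (s⁻¹ • (a - p (z + s • v))) ⬝ᵥ
        (g (z + s • v))⁻¹ *ᵥ (s⁻¹ • (a - p (z + s • v)))) (𝓝[≠] 0) (𝓝 (v ⬝ᵥ g z *ᵥ v)) := by
      have hc : Continuous fun q : Vec n × Matrix (Fin n) (Fin n) ℝ => q.1 ⬝ᵥ q.2 *ᵥ q.1 :=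
        continuous_fst.dotProduct (continuous_snd.matrix_mulVec continuous_fst)
      have h8 : -(g z *ᵥ v) ⬝ᵥ (g z)⁻¹ *ᵥ (-(g z *ᵥ v)) = v ⬝ᵥ g z *ᵥ v := by
        simp [mulVec_neg, PosDef.inv_mul' (h.pos z hz), dotProduct_comm]
      rw [← h8]
      exact (hc.tendsto _).comp (hw.prodMk_nhds hgi)
    have he : Tendsto (fun s : ℝ => e (z + s • v)) (𝓝[≠] 0) (𝓝 (e z)) := by
      have h1 := (h.hasDerivAt_e (hl 0) (by simpa using hz)).continuousAt
      simpa using h1.tendsto.mono_left nhdsWithin_le_nhds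
    have hfin := (he.mul (hT.sub (ht.const_mul 2))).add (ht.const_mul (2 * e z))
    have hval : e z * (v ⬝ᵥ g z *ᵥ v - 2 * (v ⬝ᵥ g z *ᵥ v / 2)) +
        2 * e z * (v ⬝ᵥ g z *ᵥ v / 2) = e z * (v ⬝ᵥ g z *ᵥ v) := by ring
    rw [hval] at hfin
    refine hfin.congr' ?_
    filter_upwards [hne.filter_mono nhdsWithin_le_nhds, self_mem_nhdsWithin] with s hs hs0
    have hs0 : s ≠ 0 := hs0
    have hqs := hq _ hs
    have hpos := h.pos _ hs
    have h1 := h.euler_p _ hs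
    have h2 := h.euler_e _ hs
    have h4 : (z + s • v) ⬝ᵥ M *ᵥ (z + s • v) =
        4 * e z ^ 2 + 2 * s * (z ⬝ᵥ M *ᵥ v) + s ^ 2 * (v ⬝ᵥ M *ᵥ v) := by
      simp only [mulVec_add, mulVec_smul, dotProduct_add, add_dotProduct, dotProduct_smul,
        smul_dotProduct, smul_eq_mul, hzM, dot_symm hM v z]
      ring
    have h5 : a ⬝ᵥ (z + s • v) = 2 * e z + s * (a ⬝ᵥ v) := by
      rw [dotProduct_add, dotProduct_smul, haz, smul_eq_mul]
    rw [h4] at hqs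
    set y := z + s • v
    have h3 : (g y)⁻¹ *ᵥ p y = y := by rw [← h1, PosDef.inv_mul' hpos]
    have hsi : ((g y)⁻¹).IsSymm := PosDef.symm' hpos.inv
    have h6 : (a - p y) ⬝ᵥ (g y)⁻¹ *ᵥ (a - p y) =
        a ⬝ᵥ (g y)⁻¹ *ᵥ a - 2 * (2 * e z + s * (a ⬝ᵥ v)) + 2 * e y := by
      simp only [mulVec_sub, dotProduct_sub, sub_dotProduct, h3, dot_symm hsi (p y) a, h2, h5]
      ring
    rw [mulVec_smul, dotProduct_smul, smul_dotProduct, smul_eq_mul, smul_eq_mul, h6]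
    field_simp
    linear_combination 2 * hqs
  refine symm_ext hM (hgs.smul _) fun v => ?_
  -- adding the limits for `v` and `-v` removes the term of order one
  have h1 := (key v).add (key (-v))
  have h2 : Tendsto (fun _ : ℝ => v ⬝ᵥ M *ᵥ v) (𝓝[≠] 0)
      (𝓝 (e z * (v ⬝ᵥ g z *ᵥ v) + e z * (-v ⬝ᵥ g z *ᵥ (-v)))) := by
    refine h1.congr' ?_
    filter_upwards [self_mem_nhdsWithin] with s hs
    have hs : s ≠ 0 := hs
    simp only [mulVec_neg, dotProduct_neg, neg_dotProduct]
    field_simp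
    ring
  have h3 := tendsto_nhds_unique tendsto_const_nhds h2
  rw [h3]
  simp only [mulVec_neg, dotProduct_neg, neg_dotProduct, smul_mulVec, dotProduct_smul,
    smul_eq_mul]
  ring

end Mink
end FinslerConformal

/-! ### Rigidity: the cubic comparison function -/

namespace FinslerConformal

/-- The defect of the Cauchy–Schwarz inequality as a square norm. -/
lemma cs_identity {n : ℕ} {M : Matrix (Fin n) (Fin n) ℝ} (hM : M.IsSymm) (u v : Vec n) :
    ((v ⬝ᵥ M *ᵥ v) • u - (u ⬝ᵥ M *ᵥ v) • v) ⬝ᵥ M *ᵥ ((v ⬝ᵥ M *ᵥ v) • u - (u ⬝ᵥ M *ᵥ v) • v) =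
      (v ⬝ᵥ M *ᵥ v) * ((v ⬝ᵥ M *ᵥ v) * (u ⬝ᵥ M *ᵥ u) - (u ⬝ᵥ M *ᵥ v) ^ 2) := by
  simp only [mulVec_sub, mulVec_smul, dotProduct_sub, sub_dotProduct, dotProduct_smul,
    smul_dotProduct, smul_eq_mul, dot_symm hM v u]
  ring

lemma cs_le {n : ℕ} {M : Matrix (Fin n) (Fin n) ℝ} (hM : M.PosDef) (u : Vec n) {v : Vec n}
    (hv : v ≠ 0) : (u ⬝ᵥ M *ᵥ v) ^ 2 ≤ (v ⬝ᵥ M *ᵥ v) * (u ⬝ᵥ M *ᵥ u) := by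
  have h1 := cs_identity (PosDef.symm' hM) u v
  have h2 := PosDef.pos' hM hv
  have h3 : 0 ≤ (v ⬝ᵥ M *ᵥ v) * ((v ⬝ᵥ M *ᵥ v) * (u ⬝ᵥ M *ᵥ u) - (u ⬝ᵥ M *ᵥ v) ^ 2) := by
    rw [← h1]
    by_cases h0 : (v ⬝ᵥ M *ᵥ v) • u - (u ⬝ᵥ M *ᵥ v) • v = 0
    · rw [h0]; simp
    · exact (PosDef.pos' hM h0).le
  linarith [nonneg_of_mul_nonneg_right h3 h2]

lemma cs_eq {n : ℕ} {M : Matrix (Fin n) (Fin n) ℝ} (hM : M.PosDef) {u v : Vec n}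
    (h : (u ⬝ᵥ M *ᵥ v) ^ 2 = (v ⬝ᵥ M *ᵥ v) * (u ⬝ᵥ M *ᵥ u)) :
    (v ⬝ᵥ M *ᵥ v) • u = (u ⬝ᵥ M *ᵥ v) • v := by
  have h1 := cs_identity (PosDef.symm' hM) u v
  by_contra hne
  have := PosDef.pos' hM (sub_ne_zero.2 hne)
  rw [h1, h] at this
  simp at this

namespace Mink

variable {n : ℕ} {e : Vec n → ℝ} {p : Vec n → Vec n} {g : Vec n → Matrix (Fin n) (Fin n) ℝ}
  {Ψ : Vec n → Vec n}

/-- The cubic comparison function `½ (c M⁻¹ c)(a Ψ(c)) - e(Ψ(c)) (a M⁻¹ c)` of a covector `c`.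
Its derivative in the direction `a` measures how far `e` and the quadratic form `M` are from
being proportional. -/
def cubic (e : Vec n → ℝ) (Ψ : Vec n → Vec n) (M : Matrix (Fin n) (Fin n) ℝ) (a c : Vec n) : ℝ :=
  1 / 2 * (c ⬝ᵥ M⁻¹ *ᵥ c) * (a ⬝ᵥ Ψ c) - e (Ψ c) * (a ⬝ᵥ M⁻¹ *ᵥ c)

lemma cubic_neg (M : Matrix (Fin n) (Fin n) ℝ) (a c : Vec n) :
    cubic e Ψ M (-a) c = -cubic e Ψ M a c := by
  simp only [cubic, neg_dotProduct]
  ring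

lemma cubic_hom (h : Mink e p g) (hΨ : IsInv p Ψ) (M : Matrix (Fin n) (Fin n) ℝ) (a : Vec n)
    {c : Vec n} (hc : c ≠ 0) {t : ℝ} (ht : 0 < t) :
    cubic e Ψ M a (t • c) = t ^ 3 * cubic e Ψ M a c := by
  simp only [cubic, h.inv_hom hΨ hc ht, h.hom_e _ (hΨ c hc).1 t ht, mulVec_smul, dotProduct_smul,
    smul_dotProduct, smul_eq_mul]
  ring

/-- The hypothesis of the rigidity theorem: the product of `e` with the squared dual norm of the
covector `a` is the quadratic form of the symmetric matrix `M`, up to a factor `1/2`. -/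
structure QuadNorm (e : Vec n → ℝ) (g : Vec n → Matrix (Fin n) (Fin n) ℝ) (a : Vec n)
    (M : Matrix (Fin n) (Fin n) ℝ) : Prop where
  ne : a ≠ 0
  symm : M.IsSymm
  eq : ∀ y, y ≠ 0 → e y * (a ⬝ᵥ (g y)⁻¹ *ᵥ a) = 1 / 2 * (y ⬝ᵥ M *ᵥ y)

namespace QuadNorm

variable {a : Vec n} {M : Matrix (Fin n) (Fin n) ℝ}

lemma neg (hq : QuadNorm e g a M) : QuadNorm e g (-a) M where
  ne := neg_ne_zero.2 hq.ne
  symm := hq.symm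
  eq y hy := by simpa [mulVec_neg] using hq.eq y hy

lemma hess (hq : QuadNorm e g a M) (h : Mink e p g) (hΨ : IsInv p Ψ) :
    M = (2 * e (Ψ a)) • g (Ψ a) :=
  h.hess_at hq.symm hq.eq (hΨ a hq.ne).1 (hΨ a hq.ne).2

lemma posDef (hq : QuadNorm e g a M) (h : Mink e p g) (hΨ : IsInv p Ψ) : M.PosDef := by
  have h1 := h.e_pos (hΨ a hq.ne).1
  rw [hq.hess h hΨ]
  exact (h.pos _ (hΨ a hq.ne).1).smul (by positivity)

lemma inv_mulVec (hq : QuadNorm e g a M) (h : Mink e p g) (hΨ : IsInv p Ψ) (v : Vec n) :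
    M⁻¹ *ᵥ v = (2 * e (Ψ a))⁻¹ • (g (Ψ a))⁻¹ *ᵥ v := by
  have h0 := (hΨ a hq.ne).1
  have h1 := h.e_pos h0
  have h2 : M *ᵥ ((2 * e (Ψ a))⁻¹ • (g (Ψ a))⁻¹ *ᵥ v) = v := by
    conv_lhs => rw [hq.hess h hΨ]
    rw [mulVec_smul, smul_mulVec, PosDef.mul_inv' (h.pos _ h0), smul_smul,
      inv_mul_cancel₀ (by positivity), one_smul]
  conv_lhs => rw [← h2]
  rw [PosDef.inv_mul' (hq.posDef h hΨ)]

lemma inv_mulVec_self (hq : QuadNorm e g a M) (h : Mink e p g) (hΨ : IsInv p Ψ) :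
    M⁻¹ *ᵥ a = (2 * e (Ψ a))⁻¹ • Ψ a := by
  obtain ⟨h0, h1⟩ := hΨ a hq.ne
  have h2 := PosDef.inv_mul' (h.pos _ h0) (Ψ a)
  rw [h.euler_p _ h0, h1] at h2
  rw [hq.inv_mulVec h hΨ, h2]

lemma self_dot (hq : QuadNorm e g a M) (h : Mink e p g) (hΨ : IsInv p Ψ) :
    a ⬝ᵥ M⁻¹ *ᵥ a = 1 := by
  obtain ⟨h0, h1⟩ := hΨ a hq.ne
  have h2 := h.e_pos h0
  have h3 := h.euler_e _ h0
  rw [h1] at h3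
  rw [hq.inv_mulVec_self h hΨ, dotProduct_smul, h3, smul_eq_mul, inv_mul_cancel₀ (by positivity)]

/-- The derivative of the cubic function in the direction `a`. -/
lemma hasDerivAt_cubic (hq : QuadNorm e g a M) (h : Mink e p g) (hΨ : IsInv p Ψ) {b : Vec n}
    {t : ℝ} (ht : b + t • a ≠ 0) :
    HasDerivAt (fun s : ℝ => cubic e Ψ M a (b + s • a))
      (1 / 2 * ((b + t • a) ⬝ᵥ M⁻¹ *ᵥ (b + t • a)) *
        (a ⬝ᵥ (g (Ψ (b + t • a)))⁻¹ *ᵥ a) - e (Ψ (b + t • a))) t := by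
  obtain ⟨h0, h1⟩ := hΨ _ ht
  have hM := (hq.posDef h hΨ).inv
  have hl := hasDerivAt_line b a t
  have hz := h.inv_line hΨ ht
  have hB : HasDerivAt (fun s : ℝ => M⁻¹ *ᵥ (b + s • a)) (M⁻¹ *ᵥ a) t := by
    have := hasDerivAt_line (M⁻¹ *ᵥ b) (M⁻¹ *ᵥ a) t
    simpa only [mulVec_add, mulVec_smul] using this
  have d1 := HasDerivAt.dot hl hB
  have d2 := HasDerivAt.dot (hasDerivAt_const t a) hz
  have d3 := h.hasDerivAt_e hz h0
  have d4 := HasDerivAt.dot (hasDerivAt_const t a) hB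
  have := (((d1.const_mul (1 / 2)).mul d2).sub (d3.mul d4))
  refine this.congr_deriv ?_
  have hp := h.pos _ h0
  have hsi : ((g (Ψ (b + t • a)))⁻¹).IsSymm := PosDef.symm' hp.inv
  have e1 : p (Ψ (b + t • a)) ⬝ᵥ (g (Ψ (b + t • a)))⁻¹ *ᵥ a = a ⬝ᵥ Ψ (b + t • a) := by
    rw [dot_symm hsi, ← h.euler_p _ h0, PosDef.inv_mul' hp]
  rw [e1, dot_symm (PosDef.symm' hM) (b + t • a) a, hq.self_dot h hΨ]
  simp only [zero_dotProduct]
  ring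

/-- Cauchy–Schwarz gives the sign of the derivative of the cubic function; vanishing means that
`p` is proportional to `M y`. -/
lemma deriv_nonneg (hq : QuadNorm e g a M) (h : Mink e p g) (hΨ : IsInv p Ψ) {c : Vec n}
    (hc : c ≠ 0) :
    0 ≤ 1 / 2 * (c ⬝ᵥ M⁻¹ *ᵥ c) * (a ⬝ᵥ (g (Ψ c))⁻¹ *ᵥ a) - e (Ψ c) ∧
    (1 / 2 * (c ⬝ᵥ M⁻¹ *ᵥ c) * (a ⬝ᵥ (g (Ψ c))⁻¹ *ᵥ a) - e (Ψ c) = 0 →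
      (Ψ c ⬝ᵥ M *ᵥ Ψ c) • c = (2 * e (Ψ c)) • M *ᵥ Ψ c) := by
  obtain ⟨h0, h1⟩ := hΨ _ hc
  have hM := hq.posDef h hΨ
  have h2 := hq.eq _ h0
  have h3 := h.e_pos h0
  have h4 : c ⬝ᵥ Ψ c = 2 * e (Ψ c) := by rw [← h.euler_e _ h0, h1]
  set y := Ψ c
  have hMB : M *ᵥ M⁻¹ *ᵥ c = c := PosDef.mul_inv' hM c
  have hyB : M⁻¹ *ᵥ c ⬝ᵥ M *ᵥ y = 2 * e y := by
    rw [dot_symm (PosDef.symm' hM), hMB, dotProduct_comm, h4]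
  have hBB : M⁻¹ *ᵥ c ⬝ᵥ M *ᵥ M⁻¹ *ᵥ c = c ⬝ᵥ M⁻¹ *ᵥ c := by rw [hMB, dotProduct_comm]
  have key : e y * (1 / 2 * (c ⬝ᵥ M⁻¹ *ᵥ c) * (a ⬝ᵥ (g y)⁻¹ *ᵥ a) - e y) =
      1 / 4 * ((c ⬝ᵥ M⁻¹ *ᵥ c) * (y ⬝ᵥ M *ᵥ y) - (2 * e y) ^ 2) := by
    linear_combination (1 / 2 * (c ⬝ᵥ M⁻¹ *ᵥ c)) * h2
  constructor
  · have h5 := cs_le hM (M⁻¹ *ᵥ c) h0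
    rw [hyB, hBB] at h5
    refine nonneg_of_mul_nonneg_right (a := e y) ?_ h3
    rw [key]
    linarith
  · intro hz
    rw [hz, mul_zero] at key
    have h5 := cs_eq hM (u := M⁻¹ *ᵥ c) (v := y) (by rw [hyB, hBB]; linarith)
    rw [hyB] at h5
    have h6 := congrArg (M *ᵥ ·) h5
    simpa only [mulVec_smul, hMB] using h6

/-- The cubic function has a two-sided third order expansion along a line through `a`: the second
order contact between `e` and `M` at `Ψ a` kills the lower order terms. -/
lemma cubic_limit (hq : QuadNorm e g a M) (h : Mink e p g) (hΨ : IsInv p Ψ) (b : Vec n) :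
    ∃ L, Tendsto (fun s : ℝ => cubic e Ψ M a (a + s • b) / s ^ 3) (𝓝[≠] 0) (𝓝 L) := by
  obtain ⟨h0, h1⟩ := hΨ a hq.ne
  have hl := hasDerivAt_line a b
  have hne : ∀ᶠ s : ℝ in 𝓝 0, a + s • b ≠ 0 :=
    (hl 0).continuousAt.eventually_ne (by simpa using hq.ne)
  have hdξ : ∀ s : ℝ, a + s • b ≠ 0 → HasDerivAt (fun s : ℝ => b ⬝ᵥ Ψ (a + s • b))
      (b ⬝ᵥ (g (Ψ (a + s • b)))⁻¹ *ᵥ b) s := by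
    intro s hs
    simpa using HasDerivAt.dot (hasDerivAt_const s b) (h.inv_line hΨ hs)
  have hdε : ∀ s : ℝ, a + s • b ≠ 0 → HasDerivAt (fun s : ℝ => e (Ψ (a + s • b)))
      (b ⬝ᵥ Ψ (a + s • b)) s := by
    intro s hs
    have := h.hasDerivAt_e (h.inv_line hΨ hs) (hΨ _ hs).1
    refine this.congr_deriv ?_
    have hp := h.pos _ (hΨ _ hs).1
    rw [dot_symm (PosDef.symm' hp.inv), ← h.euler_p _ (hΨ _ hs).1, PosDef.inv_mul' hp]
  have hC2 : ContDiffAt ℝ 2 (fun s : ℝ => b ⬝ᵥ Ψ (a + s • b)) 0 := by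
    have h2 : ContDiffAt ℝ 2 (fun s : ℝ => Ψ (a + s • b)) 0 :=
      ContDiffAt.comp (g := Ψ) (0 : ℝ) (by simpa using h.contDiffAt_inv hΨ hq.ne) (by fun_prop)
    rw [contDiffAt_pi] at h2
    simp only [dotProduct]
    exact ContDiffAt.sum fun i _ => contDiffAt_const.mul (h2 i)
  have hd2 : DifferentiableAt ℝ (deriv fun s : ℝ => b ⬝ᵥ Ψ (a + s • b)) 0 := by
    have h2 := (hC2.fderiv_right (m := 1) (by norm_num)).differentiableAt (by norm_num)
    exact h2.clm_apply (differentiableAt_const (1 : ℝ))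
  have ne0 : a + (0 : ℝ) • b ≠ 0 := by simpa using hq.ne
  have T1 := taylor_two (hne.mono hdε) (hdξ 0 ne0)
  have T2 := taylor_two (hne.mono fun s hs => (hdξ s hs).differentiableAt.hasDerivAt)
    hd2.hasDerivAt
  rw [(hdξ 0 ne0).deriv] at T2
  simp only [zero_smul, add_zero] at T1 T2
  set c2 := deriv (deriv fun s : ℝ => b ⬝ᵥ Ψ (a + s • b)) 0
  set ε0 := e (Ψ a)
  set ξ0 := b ⬝ᵥ Ψ a
  set ξ1 := b ⬝ᵥ (g (Ψ a))⁻¹ *ᵥ b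
  have hε0 : 0 < ε0 := h.e_pos h0
  have hM := hq.posDef h hΨ
  set k1 := a ⬝ᵥ M⁻¹ *ᵥ b
  set k2 := b ⬝ᵥ M⁻¹ *ᵥ b
  have hk1 : 2 * ε0 * k1 = ξ0 := by
    simp only [k1]
    rw [dot_symm (PosDef.symm' hM.inv), hq.inv_mulVec_self h hΨ, dotProduct_smul, smul_eq_mul,
      mul_inv_cancel_left₀ (by positivity)]
  have hk2 : 2 * ε0 * k2 = ξ1 := by
    simp only [k2]
    rw [hq.inv_mulVec h hΨ, dotProduct_smul, smul_eq_mul, mul_inv_cancel_left₀ (by positivity)]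
  set Tε := fun s : ℝ => (e (Ψ (a + s • b)) - ε0 - s * ξ0) / s ^ 2
  set Tξ := fun s : ℝ => (b ⬝ᵥ Ψ (a + s • b) - ξ0 - s * ξ1) / s ^ 2
  have hs : Tendsto (fun s : ℝ => s) (𝓝[≠] 0) (𝓝 0) := tendsto_id.mono_left nhdsWithin_le_nhds
  have hR := ((T1.const_mul 2).sub_const ξ1).sub (hs.mul T2)
  have hlim := ((((hR.const_mul k1).sub T2).add
    (((hs.mul hR).const_add ξ0).const_mul k2)).sub
    (((hs.mul T2).const_add ξ1).const_mul k1)).const_mul (1 / 2)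
  refine ⟨_, hlim.congr' ?_⟩
  filter_upwards [hne.filter_mono nhdsWithin_le_nhds, self_mem_nhdsWithin] with s hsn hs0
  have hs0 : s ≠ 0 := hs0
  have E1 : s ^ 2 * Tε s = e (Ψ (a + s • b)) - ε0 - s * ξ0 := by
    simp only [Tε]; field_simp
  have E2 : s ^ 2 * Tξ s = b ⬝ᵥ Ψ (a + s • b) - ξ0 - s * ξ1 := by
    simp only [Tξ]; field_simp
  have E3 : a ⬝ᵥ Ψ (a + s • b) + s * (b ⬝ᵥ Ψ (a + s • b)) = 2 * e (Ψ (a + s • b)) := by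
    rw [← h.euler_e _ (hΨ _ hsn).1, (hΨ _ hsn).2, add_dotProduct, smul_dotProduct, smul_eq_mul]
  have E4 : cubic e Ψ M a (a + s • b) = 1 / 2 * (1 + 2 * s * k1 + s ^ 2 * k2) *
      (a ⬝ᵥ Ψ (a + s • b)) - e (Ψ (a + s • b)) * (1 + s * k1) := by
    simp only [cubic, mulVec_add, mulVec_smul, dotProduct_add, add_dotProduct, dotProduct_smul,
      smul_dotProduct, smul_eq_mul, hq.self_dot h hΨ, dot_symm (PosDef.symm' hM.inv) b a]
    simp only [k1, k2]
    ring
  -- expand everything in `s`; the terms of order one and two cancel by `hk1` and `hk2`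
  rw [eq_div_iff (by positivity), E4]
  generalize Tε s = te at *
  generalize Tξ s = tx at *
  generalize a ⬝ᵥ Ψ (a + s • b) = ζ at *
  generalize b ⬝ᵥ Ψ (a + s • b) = ξ at *
  generalize e (Ψ (a + s • b)) = ε at *
  obtain rfl : ε = ε0 + s * ξ0 + s ^ 2 * te := by linarith
  obtain rfl : ξ = ξ0 + s * ξ1 + s ^ 2 * tx := by linarith
  obtain rfl : ζ = 2 * (ε0 + s * ξ0 + s ^ 2 * te) - s * (ξ0 + s * ξ1 + s ^ 2 * tx) := by linarith
  linear_combination (-s / 2) * hk1 + (- s ^ 2 / 2) * hk2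

/-- By homogeneity the behaviour of the cubic function on the lines `±b + t a` as `t → ∞` is its
behaviour near `a`, and the two cubic terms cancel. -/
lemma sum_tendsto (hq : QuadNorm e g a M) (h : Mink e p g) (hΨ : IsInv p Ψ) (b : Vec n) :
    Tendsto (fun t : ℝ => cubic e Ψ M a (b + t • a) + cubic e Ψ M a (-b + t • a)) atTop
      (𝓝 0) := by
  obtain ⟨L, hL⟩ := hq.cubic_limit h hΨ b
  have hne : ∀ᶠ s : ℝ in 𝓝[≠] 0, a + s • b ≠ 0 :=
    ((hasDerivAt_line a b 0).continuousAt.eventually_ne (by simpa using hq.ne)).filter_mono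
      nhdsWithin_le_nhds
  have i1 : Tendsto (fun t : ℝ => t⁻¹) atTop (𝓝[≠] 0) :=
    tendsto_nhdsWithin_iff.2 ⟨tendsto_inv_atTop_zero,
      (eventually_gt_atTop 0).mono fun t ht => (inv_pos.2 ht).ne'⟩
  have i2 : Tendsto (fun t : ℝ => -t⁻¹) atTop (𝓝[≠] 0) :=
    tendsto_nhdsWithin_iff.2 ⟨by simpa using tendsto_inv_atTop_zero (𝕜 := ℝ) |>.neg,
      (eventually_gt_atTop 0).mono fun t ht => (neg_neg_of_pos (inv_pos.2 ht)).ne⟩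
  have hlim := (hL.comp i1).sub (hL.comp i2)
  rw [sub_self] at hlim
  refine hlim.congr' ?_
  filter_upwards [i1.eventually hne, i2.eventually hne, eventually_gt_atTop 0] with t h1 h2 ht
  have e1 : b + t • a = t • (a + t⁻¹ • b) := by
    rw [smul_add, smul_smul, mul_inv_cancel₀ ht.ne', one_smul, add_comm]
  have e2 : -b + t • a = t • (a + (-t⁻¹) • b) := by
    rw [smul_add, smul_smul, mul_neg, mul_inv_cancel₀ ht.ne', neg_one_smul, add_comm]
  rw [e1, e2, h.cubic_hom hΨ M a h1 ht, h.cubic_hom hΨ M a h2 ht]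
  simp only [Function.comp_apply]
  field_simp
  ring

/-- The gradient of `e` is everywhere proportional to that of the quadratic form `M`: with
`y = Ψ b`, so that `b = p y`, this is `(y M y) p = 2 e(y) M y`. -/
lemma grad_prop (hq : QuadNorm e g a M) (h : Mink e p g) (hΨ : IsInv p Ψ) {b : Vec n}
    (hb : b ≠ 0) : (Ψ b ⬝ᵥ M *ᵥ Ψ b) • b = (2 * e (Ψ b)) • M *ᵥ Ψ b := by
  by_cases hab : ∃ c : ℝ, c • a = b
  · obtain ⟨c, rfl⟩ := hab
    obtain ⟨h0, h1⟩ := hΨ _ hb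
    have hc : c ≠ 0 := by rintro rfl; simp at hb
    -- `c • a` satisfies the hypothesis of `hess_at` with `c² M` in place of `M`
    have h2 : c ^ 2 • M = (2 * e (Ψ (c • a))) • g (Ψ (c • a)) := by
      refine h.hess_at (hq.symm.smul _) (fun y hy => ?_) h0 h1
      have := hq.eq y hy
      simp only [mulVec_smul, smul_mulVec, dotProduct_smul, smul_dotProduct, smul_eq_mul]
      linear_combination c ^ 2 * this
    set y := Ψ (c • a)
    have h3 := congrArg (· *ᵥ y) h2
    simp only [smul_mulVec, h.euler_p y h0, h1] at h3
    have h4 := congrArg (y ⬝ᵥ ·) h3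
    have h5 : y ⬝ᵥ (c • a) = 2 * e y := by rw [← h.euler_e y h0, h1, dotProduct_comm]
    simp only [dotProduct_smul, smul_eq_mul] at h4 h5
    rw [h5] at h4
    have hc2 : c ^ 2 ≠ 0 := pow_ne_zero _ hc
    refine smul_right_injective _ hc2 ?_
    simp only
    rw [smul_comm (c ^ 2) (2 * e y), h3, smul_smul (c ^ 2), h4, mul_smul]
  · push Not at hab
    have hne1 : ∀ t : ℝ, b + t • a ≠ 0 := fun t h0 => hab (-t) (by
      rw [neg_smul]; exact (eq_neg_of_add_eq_zero_left h0).symm)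
    have hne2 : ∀ t : ℝ, -b + t • a ≠ 0 := fun t h0 => hab t (by
      simpa using (eq_neg_of_add_eq_zero_right h0))
    set S := fun t : ℝ => cubic e Ψ M a (b + t • a) + cubic e Ψ M a (-b + t • a) with hS
    have hd := fun t : ℝ => (hq.hasDerivAt_cubic h hΨ (hne1 t)).fun_add
      (hq.hasDerivAt_cubic h hΨ (hne2 t))
    have hmono : Monotone S := by
      refine monotone_of_deriv_nonneg (fun t => (hd t).differentiableAt) fun t => ?_
      rw [(hd t).deriv]
      exact add_nonneg (hq.deriv_nonneg h hΨ (hne1 t)).1 (hq.deriv_nonneg h hΨ (hne2 t)).1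
    -- a monotone function with limit `0` at both ends vanishes; `-a` takes care of `t → -∞`
    have htop : Tendsto S atTop (𝓝 0) := hq.sum_tendsto h hΨ b
    have hbot : Tendsto S atBot (𝓝 0) := by
      have h1 := ((hq.neg.sum_tendsto h hΨ b).comp tendsto_neg_atBot_atTop).neg
      rw [neg_zero] at h1
      refine h1.congr fun t => ?_
      simp only [Function.comp_apply, cubic_neg, smul_neg, neg_smul, neg_neg, hS]
      ring
    have hzero : ∀ t, S t = 0 := fun t =>
      le_antisymm (hmono.ge_of_tendsto htop t) (hmono.le_of_tendsto hbot t)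
    have h1 := (hd 0).unique ((hasDerivAt_const (0 : ℝ) (0 : ℝ)).congr_of_eventuallyEq
      (Eventually.of_forall hzero))
    have h2 := hq.deriv_nonneg h hΨ (hne1 0)
    have h3 := hq.deriv_nonneg h hΨ (hne2 0)
    simp only [zero_smul, add_zero] at h1 h2 h3
    exact h2.2 (by linarith [h3.1, h2.1])

/-- Rigidity: the Minkowski energy is Euclidean, i.e. its Hessian is constant. -/
theorem hessian_const (hq : QuadNorm e g a M) (h : Mink e p g) (hn : 2 ≤ n) :
    ∃ N, ∀ y, y ≠ 0 → g y = N := by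
  obtain ⟨Ψ, hΨ⟩ := h.exists_inv
  have hM := hq.posDef h hΨ
  have hgrad : ∀ y, y ≠ 0 → (y ⬝ᵥ M *ᵥ y) • p y = (2 * e y) • M *ᵥ y := by
    intro y hy
    have := hq.grad_prop h hΨ (h.p_ne hy)
    rwa [h.inv_eq hΨ hy rfl] at this
  have hconn : IsPreconnected {y : Vec n | y ≠ 0} := by
    have : 1 < Module.rank ℝ (Vec n) := by
      rw [rank_fin_fun]
      exact_mod_cast hn
    exact (isConnected_compl_singleton_of_one_lt_rank this 0).isPreconnected
  have hMlin : ∀ y : Vec n, HasFDerivAt (fun y : Vec n => M *ᵥ y)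
      (LinearMap.toContinuousLinearMap (mulVecLin M)) y := fun y =>
    (LinearMap.toContinuousLinearMap (mulVecLin M)).hasFDerivAt
  have hdiff : ∀ y : Vec n, DifferentiableAt ℝ (fun y : Vec n => y ⬝ᵥ M *ᵥ y) y := by
    intro y
    have : ContDiff ℝ 1 (fun y : Vec n => y ⬝ᵥ M *ᵥ y) := by
      simp only [dotProduct, mulVec]
      fun_prop
    exact (this.differentiable (by norm_num)) y
  have hr : ∀ y : Vec n, y ≠ 0 → DifferentiableAt ℝ (fun y => e y / (y ⬝ᵥ M *ᵥ y)) y :=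
    fun y hy => by
      simpa only [div_eq_mul_inv] using
        (h.de y hy).fun_mul ((hdiff y).fun_inv (PosDef.pos' hM hy).ne')
  have hfd : ∀ y : Vec n, y ≠ 0 → fderiv ℝ (fun y => e y / (y ⬝ᵥ M *ᵥ y)) y = 0 := by
    intro y hy
    ext1 w
    have hl := hasDerivAt_line y w 0
    have hy' : y + (0 : ℝ) • w ≠ 0 := by simpa using hy
    have hyM := PosDef.pos' hM hy
    have hMl : HasDerivAt (fun s : ℝ => M *ᵥ (y + s • w)) (M *ᵥ w) 0 := by
      have := hasDerivAt_line (M *ᵥ y) (M *ᵥ w) 0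
      simpa only [mulVec_add, mulVec_smul] using this
    have d1 := (h.hasDerivAt_e hl hy').div (HasDerivAt.dot hl hMl)
      (PosDef.pos' hM hy').ne'
    have hr' := hr y hy
    have d2 := (show HasFDerivAt _ (fderiv ℝ (fun y => e y / (y ⬝ᵥ M *ᵥ y)) y)
      (y + (0 : ℝ) • w) by simpa using hr'.hasFDerivAt).comp_hasDerivAt (0 : ℝ) hl
    have d3 := d2.unique d1
    rw [d3]
    have hg1 := congrArg (· ⬝ᵥ w) (hgrad y hy)
    simp only [smul_dotProduct, smul_eq_mul] at hg1
    simp only [zero_smul, add_zero, dot_symm hq.symm y w, _root_.zero_apply]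
    rw [dotProduct_comm (M *ᵥ y)] at hg1
    rw [div_eq_zero_iff]
    left
    linear_combination hg1
  have h1n : (fun _ => 1 : Vec n) ≠ 0 := by
    intro h0
    have := congrFun h0 ⟨0, by omega⟩
    simp at this
  set y0 : Vec n := fun _ => 1
  set lam := e y0 / (y0 ⬝ᵥ M *ᵥ y0)
  have hconst : ∀ y : Vec n, y ≠ 0 → e y / (y ⬝ᵥ M *ᵥ y) = lam := fun y hy =>
    isOpen_ne.is_const_of_fderiv_eq_zero hconn
      (fun z hz => (hr z hz).differentiableWithinAt) (fun z hz => hfd z hz) hy h1n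
  have hp : ∀ y : Vec n, y ≠ 0 → p y = (2 * lam) • M *ᵥ y := by
    intro y hy
    have hyM := PosDef.pos' hM hy
    have h1 := hconst y hy
    rw [div_eq_iff hyM.ne'] at h1
    refine smul_right_injective _ hyM.ne' ?_
    simp only
    rw [hgrad y hy, h1, smul_smul]
    congr 1
    ring
  refine ⟨(2 * lam) • M, fun y hy => ?_⟩
  have hev : p =ᶠ[𝓝 y] fun y => (2 * lam) • M *ᵥ y :=
    Filter.eventually_of_mem (isOpen_ne.mem_nhds hy) fun z hz => hp z hz
  have h1 := ((hMlin y).const_smul (2 * lam)).congr_of_eventuallyEq hev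
  ext i j
  have h2 := congrArg (fun v => v i) (h.fp y hy (Pi.single j 1))
  rw [h1.fderiv] at h2
  simpa using h2.symm

end QuadNorm
end Mink
end FinslerConformal

/-! ### Smooth homogeneous functions on a fiber -/

namespace FinslerConformal

/-- Smoothness away from the origin of a function on a fiber. -/
def Sm {n : ℕ} (f : Vec n → ℝ) : Prop := ∀ y, y ≠ 0 → ContDiffAt ℝ (⊤ : ℕ∞) f y

/-- Positive homogeneity of degree `k` away from the origin. -/
def Hm {n : ℕ} (k : ℕ) (f : Vec n → ℝ) : Prop :=
  ∀ y, y ≠ 0 → ∀ t : ℝ, 0 < t → f (t • y) = t ^ k * f y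

/-- Partial derivative on a fiber, so that `pdy i f x = dd i (f x)` definitionally. -/
def dd {n : ℕ} (i : Fin n) (f : Vec n → ℝ) : Vec n → ℝ := fun y => fderiv ℝ f y (Pi.single i 1)

section Fiber

variable {n : ℕ} {f f₁ f₂ : Vec n → ℝ}

lemma eventually_ne_zero {y : Vec n} (hy : y ≠ 0) : ∀ᶠ z in 𝓝 y, z ≠ 0 := isOpen_ne.mem_nhds hy

lemma Sm.diff (hf : Sm f) {y : Vec n} (hy : y ≠ 0) : DifferentiableAt ℝ f y :=
  (hf y hy).differentiableAt (by simp)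

lemma Sm.congr (hf : Sm f₁) (h : ∀ y, y ≠ 0 → f₂ y = f₁ y) : Sm f₂ := fun y hy =>
  (hf y hy).congr_of_eventuallyEq ((eventually_ne_zero hy).mono h)

lemma Sm.add (h₁ : Sm f₁) (h₂ : Sm f₂) : Sm fun y => f₁ y + f₂ y :=
  fun y hy => (h₁ y hy).add (h₂ y hy)

lemma Sm.sub (h₁ : Sm f₁) (h₂ : Sm f₂) : Sm fun y => f₁ y - f₂ y :=
  fun y hy => (h₁ y hy).sub (h₂ y hy)

lemma Sm.mul (h₁ : Sm f₁) (h₂ : Sm f₂) : Sm fun y => f₁ y * f₂ y :=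
  fun y hy => (h₁ y hy).mul (h₂ y hy)

lemma Sm.const (c : ℝ) : Sm fun _ : Vec n => c := fun _ _ => contDiffAt_const

lemma Sm.coord (i : Fin n) : Sm fun y : Vec n => y i := fun _ _ => by fun_prop

lemma Sm.sum {ι : Type*} {s : Finset ι} {F : ι → Vec n → ℝ} (h : ∀ i ∈ s, Sm (F i)) :
    Sm fun y => ∑ i ∈ s, F i y :=
  fun y hy => ContDiffAt.sum fun i hi => h i hi y hy

lemma Sm.prod {ι : Type*} {s : Finset ι} {F : ι → Vec n → ℝ} (h : ∀ i ∈ s, Sm (F i)) :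
    Sm fun y => ∏ i ∈ s, F i y :=
  fun y hy => contDiffAt_prod fun i hi => h i hi y hy

lemma Sm.dd (hf : Sm f) (i : Fin n) : Sm (dd i f) := fun y hy =>
  ((hf y hy).fderiv_right (m := (⊤ : ℕ∞)) (by simp)).clm_apply contDiffAt_const

lemma dd_congr (i : Fin n) (h : ∀ y, y ≠ 0 → f₁ y = f₂ y) : ∀ y, y ≠ 0 → dd i f₁ y = dd i f₂ y := by
  intro y hy
  have : f₁ =ᶠ[𝓝 y] f₂ := (eventually_ne_zero hy).mono h
  simp only [dd, this.fderiv_eq]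

lemma dd_add (h₁ : Sm f₁) (h₂ : Sm f₂) (i : Fin n) (y : Vec n) (hy : y ≠ 0) :
    dd i (fun y => f₁ y + f₂ y) y = dd i f₁ y + dd i f₂ y := by
  simp only [dd, fderiv_fun_add (h₁.diff hy) (h₂.diff hy), _root_.add_apply]

lemma dd_const_mul (c : ℝ) (f : Vec n → ℝ) (i : Fin n) (y : Vec n) :
    dd i (fun y => c * f y) y = c * dd i f y := by
  have := congrFun (fderiv_const_smul_field (𝕜 := ℝ) (f := f) c) y
  have h2 : (fun y => c * f y) = c • f := rfl
  simp only [dd, h2, this]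
  simp

lemma dd_sum {F : Fin n → Vec n → ℝ} (h : ∀ l, Sm (F l)) (c : Fin n → ℝ) (i : Fin n) (y : Vec n)
    (hy : y ≠ 0) : dd i (fun y => ∑ l, c l * F l y) y = ∑ l, c l * dd i (F l) y := by
  have : fderiv ℝ (fun y => ∑ l, c l * F l y) y = ∑ l, fderiv ℝ (fun y => c l * F l y) y :=
    fderiv_fun_sum fun l _ => ((h l).diff hy).const_mul (c l)
  simp only [dd, this, _root_.sum_apply]
  exact Finset.sum_congr rfl fun l _ => dd_const_mul (c l) (F l) i y

lemma fderiv_eq_sum (f : Vec n → ℝ) (y w : Vec n) : fderiv ℝ f y w = ∑ i, w i * dd i f y := by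
  conv_lhs => rw [pi_eq_sum_univ' w, map_sum]
  refine Finset.sum_congr rfl fun i _ => ?_
  simp [dd]

/-- The Euler theorem on homogeneous functions. -/
lemma Hm.euler {k : ℕ} (h : Hm k f) (hf : Sm f) {y : Vec n} (hy : y ≠ 0) :
    ∑ i, y i * dd i f y = k * f y := by
  rw [← fderiv_eq_sum]
  have h1 : HasDerivAt (fun t : ℝ => t • y) y 1 := by
    simpa using (hasDerivAt_id (1 : ℝ)).smul_const y
  have h2 := (show HasFDerivAt f (fderiv ℝ f y) ((1 : ℝ) • y) by
    simpa using (hf.diff hy).hasFDerivAt).comp_hasDerivAt (1 : ℝ) h1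
  have h3 : HasDerivAt (fun t : ℝ => t ^ k * f y) (k * f y) 1 := by
    simpa using (hasDerivAt_pow k (1 : ℝ)).mul_const (f y)
  refine h2.unique (h3.congr_of_eventuallyEq ?_)
  filter_upwards [eventually_gt_nhds (zero_lt_one' ℝ)] with t ht
  exact h y hy t ht

/-- Differentiation lowers the degree of homogeneity by one. -/
lemma Hm.dd {k : ℕ} (h : Hm (k + 1) f) (i : Fin n) : Hm k (dd i f) := by
  intro y hy t ht
  have h1 : (fun z => f (t • z)) =ᶠ[𝓝 y] fun z => t ^ (k + 1) * f z :=
    (eventually_ne_zero hy).mono fun z hz => h z hz t ht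
  have h2 := h1.fderiv_eq (𝕜 := ℝ)
  have h3 := congrArg (fun L : Vec n →L[ℝ] ℝ => L (Pi.single i 1)) h2
  have h4 : fderiv ℝ (fun z => f (t • z)) y = t • fderiv ℝ f (t • y) :=
    fderiv_comp_smul (𝕜 := ℝ) (f := f) t
  have h5 := dd_const_mul (t ^ (k + 1)) f i y
  simp only [FinslerConformal.dd] at h5 ⊢
  simp only [h4, h5, _root_.smul_apply, smul_eq_mul] at h3
  refine mul_left_cancel₀ ht.ne' ?_
  rw [h3]
  ring

lemma Sm.det {m : ℕ} {A : Vec n → Matrix (Fin m) (Fin m) ℝ} (h : ∀ i j, Sm fun y => A y i j) :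
    Sm fun y => (A y).det := by
  simp only [det_apply']
  exact Sm.sum fun σ _ => (Sm.const _).mul (Sm.prod fun i _ => h _ _)

lemma Sm.matrix_inv {m : ℕ} {A : Vec n → Matrix (Fin m) (Fin m) ℝ} (h : ∀ i j, Sm fun y => A y i j)
    (hA : ∀ y, y ≠ 0 → (A y).det ≠ 0) (i j : Fin m) : Sm fun y => (A y)⁻¹ i j := by
  have h1 : Sm fun y => (A y).adjugate i j := by
    simp only [adjugate_apply]
    refine Sm.det fun k l => ?_
    by_cases hk : k = j
    · subst hk
      simpa using Sm.const _
    · simpa [updateRow_ne hk] using h k l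
  have h2 : Sm fun y => ((A y).det)⁻¹ := fun y hy => (Sm.det h y hy).inv (hA y hy)
  simpa only [inv_def, Ring.inverse_eq_inv', Matrix.smul_apply, smul_eq_mul] using h2.mul h1

/-- A `2`-homogeneous function on `ℝⁿ`, `n ≥ 2`, whose third derivatives vanish away from the
origin is a quadratic form: the second derivatives are constant on the connected set `y ≠ 0`. -/
lemma quadratic_of_third (hn : 2 ≤ n) (hf : Sm f) (h2 : Hm 2 f)
    (h3 : ∀ i j k y, y ≠ 0 → dd k (dd j (dd i f)) y = 0) :
    ∃ C : Matrix (Fin n) (Fin n) ℝ, ∀ y, y ≠ 0 → 2 * f y = y ⬝ᵥ C *ᵥ y := by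
  have hconn : IsPreconnected {y : Vec n | y ≠ 0} := by
    have : 1 < Module.rank ℝ (Vec n) := by
      rw [rank_fin_fun]
      exact_mod_cast hn
    exact (isConnected_compl_singleton_of_one_lt_rank this 0).isPreconnected
  have h1n : (fun _ => 1 : Vec n) ≠ 0 := by
    intro h0
    have := congrFun h0 ⟨0, by omega⟩
    simp at this
  have hc : ∀ i j y, y ≠ 0 → dd j (dd i f) y = dd j (dd i f) (fun _ => 1) := by
    intro i j y hy
    refine isOpen_ne.is_const_of_fderiv_eq_zero (𝕜 := ℝ) hconn
      (fun z hz => (((hf.dd i).dd j).diff hz).differentiableWithinAt) (fun z hz => ?_) hy h1n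
    ext1 w
    rw [fderiv_eq_sum]
    simp [h3 i j _ z hz]
  refine ⟨of fun i j => dd j (dd i f) (fun _ => 1), fun y hy => ?_⟩
  have e1 := h2.euler hf hy
  have e2 := fun i => (h2.dd i).euler (hf.dd i) hy
  rw [← Nat.cast_two, ← e1, dotProduct]
  refine Finset.sum_congr rfl fun i _ => ?_
  congr 1
  have := e2 i
  simp only [Nat.cast_one, one_mul] at this
  rw [← this]
  simp only [mulVec, dotProduct, of_apply]
  exact Finset.sum_congr rfl fun j _ => by rw [hc i j y hy, mul_comm]

end Fiber

end FinslerConformal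

/-! ### Finsler energies and conformal changes -/

namespace FinslerConformal

namespace IsFinslerEnergy

variable {n : ℕ} {U : Set (Vec n)} {E : Fn n} {x : Vec n}

/-- Joint smoothness in position and direction. -/
lemma contDiffAt (hE : IsFinslerEnergy U E) (hU : IsOpen U) (hx : x ∈ U) {y : Vec n}
    (hy : y ≠ 0) : ContDiffAt ℝ (⊤ : ℕ∞) (fun p : Vec n × Vec n => E p.1 p.2) (x, y) :=
  hE.smooth.contDiffAt ((hU.prod isOpen_ne).mem_nhds ⟨hx, hy⟩)

lemma sm (hE : IsFinslerEnergy U E) (hU : IsOpen U) (hx : x ∈ U) : Sm (E x) := fun y hy =>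
  ContDiffAt.comp (g := fun p : Vec n × Vec n => E p.1 p.2) (f := fun z => (x, z)) y
    (hE.contDiffAt hU hx hy) (contDiffAt_const.prodMk contDiffAt_id)

lemma hasFDerivAt_fst (hE : IsFinslerEnergy U E) (hU : IsOpen U) (hx : x ∈ U) {y : Vec n}
    (hy : y ≠ 0) : HasFDerivAt (fun x' => E x' y)
      ((fderiv ℝ (fun p : Vec n × Vec n => E p.1 p.2) (x, y)).comp
        (ContinuousLinearMap.inl ℝ (Vec n) (Vec n))) x :=
  HasFDerivAt.comp (g := fun p : Vec n × Vec n => E p.1 p.2) (f := fun z => (z, y)) x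
    ((hE.contDiffAt hU hx hy).differentiableAt (by simp)).hasFDerivAt (hasFDerivAt_prodMk_left x y)

lemma sm_pdx (hE : IsFinslerEnergy U E) (hU : IsOpen U) (hx : x ∈ U) (k : Fin n) :
    Sm (pdx k E x) := by
  have h1 : Sm fun y => fderiv ℝ (fun p : Vec n × Vec n => E p.1 p.2) (x, y)
      (Pi.single k 1, 0) := fun y hy => by
    have h2 := (hE.contDiffAt hU hx hy).fderiv_right (m := (⊤ : ℕ∞)) (by simp)
    exact (ContDiffAt.comp (f := fun z => (x, z)) y h2
      (contDiffAt_const.prodMk contDiffAt_id)).clm_apply contDiffAt_const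
  refine h1.congr fun y hy => ?_
  simp [pdx, (hE.hasFDerivAt_fst hU hx hy).fderiv]

lemma hm (hE : IsFinslerEnergy U E) (hx : x ∈ U) : Hm 2 (E x) := hE.homog x hx

lemma sm_gmat (hE : IsFinslerEnergy U E) (hU : IsOpen U) (hx : x ∈ U) (i j : Fin n) :
    Sm fun y => gmat E x y i j := ((hE.sm hU hx).dd j).dd i

lemma sm_gup (hE : IsFinslerEnergy U E) (hU : IsOpen U) (hx : x ∈ U) (i j : Fin n) :
    Sm (gup E i j x) :=
  Sm.matrix_inv (hE.sm_gmat hU hx) (fun y hy => (hE.posdef x hx y hy).det_pos.ne') i j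

/-- The Euler relation `g_{ij} y^j = ∂E/∂y^i`. -/
lemma gmat_mulVec (hE : IsFinslerEnergy U E) (hU : IsOpen U) (hx : x ∈ U) {y : Vec n}
    (hy : y ≠ 0) : gmat E x y *ᵥ y = fun i => pdy i E x y := by
  ext j
  have h1 := ((hE.hm hx).dd j).euler ((hE.sm hU hx).dd j) hy
  have hs := PosDef.symm' (hE.posdef x hx y hy)
  simp only [Nat.cast_one, one_mul] at h1
  change _ = dd j (E x) y
  rw [← h1, mulVec, dotProduct]
  refine Finset.sum_congr rfl fun i _ => ?_
  rw [← hs.apply, mul_comm]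
  rfl

/-- At each base point, a Finsler energy is a Minkowski energy. -/
lemma mink (hE : IsFinslerEnergy U E) (hU : IsOpen U) (hx : x ∈ U) :
    Mink (E x) (fun y i => pdy i E x y) (gmat E x) where
  de y hy := (hE.sm hU hx).diff hy
  smooth y hy := contDiffAt_pi.2 fun i =>
    contDiffAt_infty.1 (((hE.sm hU hx).dd i) y hy) 2
  fe y hy w := by
    rw [fderiv_eq_sum, dotProduct]
    exact Finset.sum_congr rfl fun i _ => mul_comm _ _
  fp y hy w := by
    have hs := PosDef.symm' (hE.posdef x hx y hy)
    ext j
    have h1 : HasFDerivAt (fun y i => pdy i E x y)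
        (ContinuousLinearMap.pi fun i => fderiv ℝ (pdy i E x) y) y :=
      hasFDerivAt_pi.2 fun i => (((hE.sm hU hx).dd i).diff hy).hasFDerivAt
    rw [h1.fderiv, ContinuousLinearMap.coe_pi']
    change fderiv ℝ (pdy j E x) y w = _
    rw [fderiv_eq_sum, mulVec, dotProduct]
    refine Finset.sum_congr rfl fun i _ => ?_
    rw [← hs.apply, mul_comm]
    rfl
  pos y hy := hE.posdef x hx y hy
  euler_e y hy := by
    have := (hE.hm hx).euler (hE.sm hU hx) hy
    rw [dotProduct_comm, dotProduct]
    exact_mod_cast this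
  euler_p y hy := hE.gmat_mulVec hU hx hy
  hom_e y hy t ht := hE.homog x hx y hy t ht
  hom_p y hy t ht := by
    ext i
    have h1 := (hE.hm hx).dd i y hy t ht
    rw [pow_one] at h1
    exact h1

lemma gmat_hom (hE : IsFinslerEnergy U E) (hx : x ∈ U) {y : Vec n} (hy : y ≠ 0) {t : ℝ}
    (ht : 0 < t) : gmat E x (t • y) = gmat E x y := by
  ext i j
  have h1 := ((hE.hm hx).dd j).dd i y hy t ht
  rw [pow_zero, one_mul] at h1
  exact h1

lemma sm_spray (hE : IsFinslerEnergy U E) (hU : IsOpen U) (hx : x ∈ U) (l : Fin n) :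
    Sm (spray E l x) :=
  (Sm.const _).mul <| Sm.sum fun m _ => (hE.sm_gup hU hx l m).mul <|
    (Sm.sum fun k _ => (Sm.coord k).mul ((hE.sm_pdx hU hx k).dd m)).sub (hE.sm_pdx hU hx m)

lemma sm_Xup (hE : IsFinslerEnergy U E) (hU : IsOpen U) (hx : x ∈ U) (α : Vec n → ℝ)
    (l : Fin n) : Sm (Xup E α l x) :=
  Sm.sum fun m _ => (hE.sm_gup hU hx l m).mul (Sm.const _)

variable {α : Vec n → ℝ}

lemma pdy_confE (E : Fn n) (α : Vec n → ℝ) (x : Vec n) (i : Fin n) :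
    pdy i (confE E α) x = fun y => Real.exp (2 * α x) * pdy i E x y := by
  ext y
  exact dd_const_mul _ (E x) i y

lemma gmat_confE (E : Fn n) (α : Vec n → ℝ) (x y : Vec n) :
    gmat (confE E α) x y = Real.exp (2 * α x) • gmat E x y := by
  ext i j
  have : dd i (pdy j (confE E α) x) y = Real.exp (2 * α x) * dd i (pdy j E x) y := by
    rw [pdy_confE]
    exact dd_const_mul _ _ i y
  exact this

lemma gup_confE (hE : IsFinslerEnergy U E) (hx : x ∈ U) (α : Vec n → ℝ) {y : Vec n}
    (hy : y ≠ 0) (i j : Fin n) :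
    gup (confE E α) i j x y = (Real.exp (2 * α x))⁻¹ * gup E i j x y := by
  have h0 := (Real.exp_pos (2 * α x)).ne'
  have hdet : IsUnit (gmat E x y).det := (hE.posdef x hx y hy).det_pos.ne'.isUnit
  have : (gmat (confE E α) x y)⁻¹ = (Real.exp (2 * α x))⁻¹ • (gmat E x y)⁻¹ := by
    rw [gmat_confE]
    refine inv_eq_left_inv ?_
    rw [smul_mul_smul_comm, inv_mul_cancel₀ h0, one_smul, nonsing_inv_mul _ hdet]
  simp only [gup, this, Matrix.smul_apply, smul_eq_mul]

lemma pdx_confE (hE : IsFinslerEnergy U E) (hU : IsOpen U) (hα : ContDiffOn ℝ (⊤ : ℕ∞) α U)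
    (hx : x ∈ U) {y : Vec n} (hy : y ≠ 0) (k : Fin n) :
    pdx k (confE E α) x y =
      Real.exp (2 * α x) * (2 * pda α k x * E x y + pdx k E x y) := by
  have h1 : HasFDerivAt α (fderiv ℝ α x) x :=
    ((hα.contDiffAt (hU.mem_nhds hx)).differentiableAt (by simp)).hasFDerivAt
  have h2 := (hE.hasFDerivAt_fst hU hx hy).differentiableAt.hasFDerivAt
  have h3 := ((h1.const_mul 2).exp).fun_mul h2
  simp only [pdx, confE, pda]
  rw [h3.fderiv]
  simp
  ring

/-- The change of the geodesic spray under a conformal change of the energy. -/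
lemma spray_confE (hE : IsFinslerEnergy U E) (hU : IsOpen U) (hα : ContDiffOn ℝ (⊤ : ℕ∞) α U)
    (hx : x ∈ U) {y : Vec n} (hy : y ≠ 0) (l : Fin n) :
    spray (confE E α) l x y =
      spray E l x y + (yalpha α x y * y l - E x y * Xup E α l x y) := by
  have h0 := (Real.exp_pos (2 * α x)).ne'
  have h1 : ∀ m k, pdy m (pdx k (confE E α)) x y = Real.exp (2 * α x) *
      (2 * pda α k x * pdy m E x y + pdy m (pdx k E) x y) := by
    intro m k
    have e1 := dd_congr m (f₁ := pdx k (confE E α) x)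
      (f₂ := fun y => Real.exp (2 * α x) * (2 * pda α k x * E x y + pdx k E x y))
      (fun z hz => hE.pdx_confE hU hα hx hz k) y hy
    rw [dd_const_mul _ _ m, dd_add ((Sm.const _).mul (hE.sm hU hx)) (hE.sm_pdx hU hx k) m y hy,
      dd_const_mul] at e1
    exact e1
  have h2 : ∑ m, gup E l m x y * pdy m E x y = y l := by
    have := congrFun (PosDef.inv_mul' (hE.posdef x hx y hy) y) l
    rw [hE.gmat_mulVec hU hx hy] at this
    exact this
  have h3 : ∀ m, gup (confE E α) l m x y *
      ((∑ k, y k * pdy m (pdx k (confE E α)) x y) - pdx m (confE E α) x y) =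
      gup E l m x y * ((∑ k, y k * pdy m (pdx k E) x y) - pdx m E x y) +
      (2 * yalpha α x y * (gup E l m x y * pdy m E x y) -
        2 * E x y * (gup E l m x y * pda α m x)) := by
    intro m
    have h4 : (∑ k, y k * pdy m (pdx k (confE E α)) x y) = Real.exp (2 * α x) *
        (2 * yalpha α x y * pdy m E x y + ∑ k, y k * pdy m (pdx k E) x y) := by
      simp only [h1, yalpha, Finset.mul_sum, Finset.sum_mul, ← Finset.sum_add_distrib]
      exact Finset.sum_congr rfl fun k _ => by ring
    rw [h4, hE.gup_confE hx α hy, hE.pdx_confE hU hα hx hy]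
    field_simp
    ring
  simp only [spray, h3, Finset.sum_add_distrib, Finset.sum_sub_distrib, ← Finset.mul_sum, h2, Xup]
  ring

/-- Constant-coefficient combinations commute with threefold differentiation. -/
lemma dd_three_sum {F : Fin n → Vec n → ℝ} (h : ∀ l, Sm (F l)) (c : Fin n → ℝ) (i j k : Fin n)
    (y : Vec n) (hy : y ≠ 0) : dd k (dd j (dd i fun y => ∑ l, c l * F l y)) y =
      ∑ l, c l * dd k (dd j (dd i (F l))) y := by
  have h1 := dd_congr k (dd_congr j (dd_sum h c i)) y hy
  have h2 := dd_congr k (dd_sum (fun l => (h l).dd i) c j) y hy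
  rw [h1, h2, dd_sum (fun l => ((h l).dd i).dd j) c k y hy]

/-- Equality of the contracted mixed curvatures forces `E · Xˡαₗ` to be a quadratic form on each
fiber. -/
lemma exists_quad (hn : 2 ≤ n) (hU : IsOpen U) (hE : IsFinslerEnergy U E)
    (hα : ContDiffOn ℝ (⊤ : ℕ∞) α U)
    (hx : x ∈ U) (hinv : ∀ y : Vec n, y ≠ 0 → ∀ i j k : Fin n,
      (∑ l, mixedCurv (confE E α) l i j k x y * pda α l x) =
        ∑ l, mixedCurv E l i j k x y * pda α l x) :
    ∃ M : Matrix (Fin n) (Fin n) ℝ, M.IsSymm ∧ ∀ y, y ≠ 0 →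
      E x y * ((fun m => pda α m x) ⬝ᵥ (gmat E x y)⁻¹ *ᵥ fun m => pda α m x) =
        1 / 2 * (y ⬝ᵥ M *ᵥ y) := by
  set a : Vec n := fun m => pda α m x with ha
  -- `u` is the contraction with `a` of the change of the spray
  set u : Vec n → ℝ := fun y => ∑ l, a l * (yalpha α x y * y l - E x y * Xup E α l x y) with hu
  have smt : ∀ l, Sm fun y => yalpha α x y * y l - E x y * Xup E α l x y := fun l =>
    ((Sm.sum fun m _ => (Sm.coord m).mul (Sm.const _)).mul (Sm.coord l)).sub
      ((hE.sm hU hx).mul (hE.sm_Xup hU hx α l))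
  have smu : Sm u := Sm.sum fun l _ => (Sm.const _).mul (smt l)
  have hueq : ∀ y, u y = (a ⬝ᵥ y) ^ 2 - E x y * (a ⬝ᵥ (gmat E x y)⁻¹ *ᵥ a) := by
    intro y
    have e1 : yalpha α x y = a ⬝ᵥ y := by rw [dotProduct_comm]; rfl
    have e2 : a ⬝ᵥ (gmat E x y)⁻¹ *ᵥ a = ∑ l, a l * Xup E α l x y := rfl
    simp only [hu, e1, e2, mul_sub, Finset.sum_sub_distrib, sq, Finset.mul_sum]
    congr 1
    · conv_rhs => rw [← smul_eq_mul, ← dotProduct_smul]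
      simp only [dotProduct, Pi.smul_apply, smul_eq_mul]
    · exact Finset.sum_congr rfl fun l _ => by ring
  have hmu : Hm 2 u := by
    intro y hy t ht
    rw [hueq, hueq, hE.gmat_hom hx hy ht, hE.homog x hx y hy t ht, dotProduct_smul, smul_eq_mul]
    ring
  have h3 : ∀ i j k y, y ≠ 0 → dd k (dd j (dd i u)) y = 0 := by
    intro i j k y hy
    have e1 : ∀ l, dd k (dd j (dd i (spray (confE E α) l x))) y =
        dd k (dd j (dd i (spray E l x))) y +
          dd k (dd j (dd i fun y => yalpha α x y * y l - E x y * Xup E α l x y)) y := by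
      intro l
      have c1 := dd_congr k (dd_congr j (dd_congr i fun z hz => hE.spray_confE hU hα hx hz l)) y hy
      have c2 := dd_congr k (dd_congr j (dd_add (hE.sm_spray hU hx l) (smt l) i)) y hy
      have c3 := dd_congr k (dd_add ((hE.sm_spray hU hx l).dd i) ((smt l).dd i) j) y hy
      rw [c1, c2, c3, dd_add (((hE.sm_spray hU hx l).dd i).dd j) (((smt l).dd i).dd j) k y hy]
    rw [hu, dd_three_sum smt a i j k y hy]
    have e2 := hinv y hy i j k
    have e3 : ∀ (F : Fn n) l, mixedCurv F l i j k x y = -dd k (dd j (dd i (spray F l x))) y :=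
      fun _ _ => rfl
    simp only [e3, e1] at e2
    simp only [neg_add, add_mul, Finset.sum_add_distrib, add_eq_left, neg_mul,
      Finset.sum_neg_distrib, neg_eq_zero] at e2
    rw [← e2]
    exact Finset.sum_congr rfl fun l _ => mul_comm _ _
  obtain ⟨C, hC⟩ := quadratic_of_third hn smu hmu h3
  refine ⟨(2 : ℝ) • vecMulVec a a - (1 / 2 : ℝ) • (C + Cᵀ), ?_, fun y hy => ?_⟩
  · rw [Matrix.IsSymm]
    simp [transpose_vecMulVec, add_comm]
  · have e1 := hC y hy
    rw [hueq] at e1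
    have e2 : y ⬝ᵥ Cᵀ *ᵥ y = y ⬝ᵥ C *ᵥ y := by
      rw [mulVec_transpose, dotProduct_comm, ← dotProduct_mulVec]
    have e3 : y ⬝ᵥ vecMulVec a a *ᵥ y = (a ⬝ᵥ y) ^ 2 := by
      simp [vecMulVec_mulVec, dotProduct_comm y a, sq]
    simp only [sub_mulVec, add_mulVec, smul_mulVec, dotProduct_sub, dotProduct_add,
      dotProduct_smul, smul_eq_mul, e2, e3]
    linarith

/-- Equality of the contracted mixed curvatures forces the gradient `Xˡ` not to depend on the
direction: either `α` is critical at `x`, or the fiber metric at `x` is Euclidean. -/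
lemma XupD_eq_zero (hn : 2 ≤ n) (hU : IsOpen U) (hE : IsFinslerEnergy U E)
    (hα : ContDiffOn ℝ (⊤ : ℕ∞) α U)
    (hx : x ∈ U) (hinv : ∀ y : Vec n, y ≠ 0 → ∀ i j k : Fin n,
      (∑ l, mixedCurv (confE E α) l i j k x y * pda α l x) =
        ∑ l, mixedCurv E l i j k x y * pda α l x)
    {y : Vec n} (hy : y ≠ 0) (l i : Fin n) : XupD E α l i x y = 0 := by
  suffices h : ∃ c, ∀ z, z ≠ 0 → Xup E α l x z = c by
    obtain ⟨c, hc⟩ := h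
    have h1 := dd_congr i hc y hy
    have h2 : dd i (fun _ => c) y = 0 := by simp [dd]
    exact h1.trans h2
  obtain ⟨M, hMs, hM⟩ := hE.exists_quad hn hU hα hx hinv
  by_cases ha : (fun m => pda α m x) = 0
  · refine ⟨0, fun z _ => ?_⟩
    simp [Xup, fun m => show pda α m x = 0 from congrFun ha m]
  · obtain ⟨N, hN⟩ := Mink.QuadNorm.hessian_const ⟨ha, hMs, hM⟩ (hE.mink hU hx) hn
    exact ⟨∑ m, N⁻¹ l m * pda α m x, fun z hz => by simp only [Xup, gup, hN z hz]⟩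

end IsFinslerEnergy

end FinslerConformal


namespace FinslerConformal

/-- If `P̃^l_{ijk}α_l = P^l_{ijk}α_l` holds at every
`(x,y) ∈ U × (ℝⁿ \ {0})`, then
`0 = (1/(2E)) · ( X^i_mX^mX^s_iα_s ( X^lα_l − (y^mα_m)²/(2E) ) − (X^kX^j_kα_j)² )
     + X^j X^s_j X^a X^c X^i_m X^m Q_{aisc}`. -/
theorem mixedCurv_contracted_invariance_gives_gram_curvature_relation
    {n : ℕ} (hn : 2 ≤ n) (U : Set (Vec n)) (hU : IsOpen U)
    (E : Fn n) (hE : IsFinslerEnergy U E)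
    (α : Vec n → ℝ) (hα : ContDiffOn ℝ (⊤ : ℕ∞) α U)
    (hinv : ∀ x ∈ U, ∀ y : Vec n, y ≠ 0 → ∀ i j k : Fin n,
      (∑ l, mixedCurv (confE E α) l i j k x y * pda α l x) =
        ∑ l, mixedCurv E l i j k x y * pda α l x) :
    ∀ x ∈ U, ∀ y : Vec n, y ≠ 0 →
      0 = (1 / (2 * E x y)) * gramEtaW E α x y + Qcon E α x y := by
  intro x hx y hy
  have hX : ∀ l i, XupD E α l i x y = 0 := fun l i =>
    hE.XupD_eq_zero hn hU hα hx (hinv x hx) hy l i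
  -- each term of both summands has a factor `X^l_i` or `W^i = X^s X^i_s`
  simp [gramEtaW, Qcon, Wup, hX]

end FinslerConformal
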